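/- arXiv:1805.06272 — 2 statements merged into one kernel-verified Lean document; each statement's English description precedes it below -/
import Mathlib

section
/- Let p > 2 and p > θ > 0. With h_k the functions of the explicit construction, there exist k_0 ∈ ℕ and a_0 > π such that ‖h_k − G_a‖_{L^p(dm_θ)} ≥ ‖h_k − G_π‖_{L^p(dm_θ)} for all a ≥ a_0 and all k ≥ k_0, where G_a(x) = (2a/π)^{1/4} e^{−a x²}. -/
/-!
Dividing by `g = G_π` turns `‖h_k − G_a‖^p` in `L^p(dm_θ)` into `∫ |s − t_a|^p w dx`, where
`s = h_k / g`, `t_a = G_a / g` (so `t_π = 1`) and `w = g^{p−θ}` is a Gaussian weight, integrable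
because `θ < p` (`integral_mTheta_eq`). These integrals are compared pointwise (`pointwise_le`).

* For `2√π |x| ≤ k − d_k` the ratio `s` is the constant `c_k^{-1/2}`, with `c_k` the normalizing
  constant. Since `c_k → 1` uniformly in the admissible `L` (`abs_norm_sub_one_le`), `|s − 1|^p`
  is uniformly small there, whereas on `[1, 2]` the ratio `t_a` is at most `1/4` for `a` large
  (`exists_Gratio_le`) and `|s − t_a|^p ≥ 4^{-p}`.
* For larger `|x|`, either `s ≥ 1 ≥ t_a`, and then `|s − 1| ≤ |s − t_a|`, or `0 ≤ s ≤ 1`, and then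
  `|s − 1|^p ≤ 1 ≤ 4π x² / (k − 1)²`, which has integral `O(k^{-2})` against `w`.

The fixed gain `4^{-p} ∫_{[1,2]} w` beats both errors when `k` is large. The possibly huge
contribution of the exponential tail of `h_k` is never estimated; it only has to be finite
(`integrable_diff`).
-/


open MeasureTheory Filter Real Topology FourierTransform

noncomputable section

/-- Shannon entropy `S(u) = −∫ u log u dx`. -/
def shannonEntropy (u : ℝ → ℝ) : ℝ := -∫ x, u x * Real.log (u x)

/-- Deficit of the Beckner–Hirschman inequality,
`δ_BH(h) = S(h²) + S(|ĥ|²) − (1 − log 2)`. -/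
def BHdeficit (h : ℝ → ℝ) : ℝ :=
  shannonEntropy (fun x => h x ^ 2)
    + shannonEntropy (fun ξ => ‖𝓕 (fun y => (h y : ℂ)) ξ‖ ^ 2)
    - (1 - Real.log 2)

/-- The Gaussian optimizers `G_{a,r}(x) = (2a/π)^{1/4} e^{−a(x−r)²}` of the BHI. -/
def Gfun (a r : ℝ) (x : ℝ) : ℝ := (2 * a / π) ^ ((1 : ℝ) / 4) * Real.exp (-a * (x - r) ^ 2)

/-- The `L^p(dμ)` norm of a real function on `ℝ`. -/
def LpNormR (p : ℝ) (μ : Measure ℝ) (u : ℝ → ℝ) : ℝ := (∫ x, |u x| ^ p ∂μ) ^ (1 / p)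

/-- The `L^p(dμ)` distance from `h` to the set `𝔊 = {G_{a,r} : a > 0, r ∈ ℝ}` of
optimizers of the BHI. -/
def distToG (p : ℝ) (μ : Measure ℝ) (h : ℝ → ℝ) : ℝ :=
  sInf {d : ℝ | ∃ a r : ℝ, 0 < a ∧ d = LpNormR p μ (fun x => h x - Gfun a r x)}

/-- The weighted measure `dη_λ = |x|^λ dx` on `ℝ`. -/
def etaMeasure (l : ℝ) : Measure ℝ :=
  volume.withDensity (fun x => ENNReal.ofReal (|x| ^ l))

/-- The weighted measure `dm_θ = g^{−θ} dx` on `ℝ`, where `g = G_{π,0}`. -/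
def mTheta (θ : ℝ) : Measure ℝ :=
  volume.withDensity (fun x => ENNReal.ofReal ((Gfun π 0 x) ^ (-θ)))

/-- The standard Gaussian measure on `ℝ`. -/
def gaussR : Measure ℝ :=
  volume.withDensity (fun x => ENNReal.ofReal ((2 * π) ^ (-(1 : ℝ) / 2) * Real.exp (-x ^ 2 / 2)))

/-- `d_k = 1/(2k)`. -/
def dkP (k : ℕ) : ℝ := 1 / (2 * k)

/-- `b_k = 2k`. -/
def bkP (k : ℕ) : ℝ := 2 * k

/-- `r_k = 1/(4√k)`. -/
def rkP (k : ℕ) : ℝ := 1 / (4 * Real.sqrt k)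

/-- An admissible interpolating function `L_k`: a monotone `C^∞` function with
`L_k(k − d_k) = 1`, `L_k(k) = r_k` and `|L_k′| ≤ 2/d_k` on `(k − d_k, k]`. -/
def Admissible (k : ℕ) (L : ℝ → ℝ) : Prop :=
  ContDiff ℝ (⊤ : ℕ∞) L ∧
  (MonotoneOn L (Set.Ioc ((k : ℝ) - dkP k) (k : ℝ)) ∨
    AntitoneOn L (Set.Ioc ((k : ℝ) - dkP k) (k : ℝ))) ∧
  L ((k : ℝ) - dkP k) = 1 ∧ L (k : ℝ) = rkP k ∧
  ∀ x ∈ Set.Ioc ((k : ℝ) - dkP k) (k : ℝ), |deriv L x| ≤ 2 / dkP k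

/-- The symmetric unnormalized density `f̃_k` of the explicit construction. -/
def ftilde (k : ℕ) (L : ℝ → ℝ) (x : ℝ) : ℝ :=
  if |x| ≤ (k : ℝ) - dkP k then 1
  else if |x| ≤ (k : ℝ) then L |x|
  else rkP k * Real.exp (bkP k * |x| - bkP k ^ 2 / 2)

/-- The normalized density `f_k = f̃_k / ‖f̃_k‖_{L¹(dγ)}`. -/
def fkc (k : ℕ) (L : ℝ → ℝ) (x : ℝ) : ℝ :=
  ftilde k L x / ∫ y, ftilde k L y ∂gaussR

/-- `h_k(x) = (f_k(2√π x))^{1/2} g(x)` with `g = G_{π,0}`. -/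
def hkc (k : ℕ) (L : ℝ → ℝ) (x : ℝ) : ℝ :=
  Real.sqrt (fkc k L (2 * Real.sqrt π * x)) * Gfun π 0 x

/-! ### Bounds on the interpolation and on the normalizing constant -/

/-- An admissible interpolation takes values in `[0, 1]`. The monotone alternative is degenerate
(it would force `1 ≤ r_k`), but the bound holds in both cases. -/
lemma admissible_mem_Icc {k : ℕ} (hk : 1 ≤ k) {L : ℝ → ℝ} (hL : Admissible k L) {x : ℝ}
    (hx : x ∈ Set.Ioc ((k : ℝ) - dkP k) (k : ℝ)) : 0 ≤ L x ∧ L x ≤ 1 := by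
  obtain ⟨hs, hm, h1, hr, -⟩ := hL
  have hc : Continuous L := hs.continuous
  have hk' : (1 : ℝ) ≤ k := by exact_mod_cast hk
  have hr0 : 0 ≤ rkP k := by unfold rkP; positivity
  have hr1 : rkP k ≤ 1 := by
    unfold rkP
    have : 1 ≤ Real.sqrt k := Real.one_le_sqrt.2 hk'
    rw [div_le_one (by positivity)]; linarith
  have hkm : (k : ℝ) ∈ Set.Ioc ((k : ℝ) - dkP k) (k : ℝ) := ⟨hx.1.trans_le hx.2, le_rfl⟩
  have hcl : (k : ℝ) - dkP k ∈ closure (Set.Ioc ((k : ℝ) - dkP k) x) := by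
    rw [closure_Ioc hx.1.ne]; exact ⟨le_rfl, hx.1.le⟩
  rcases hm with hm | hm
  · have hle := hm hx hkm hx.2
    have hge : L ((k : ℝ) - dkP k) ≤ L x :=
      ContinuousWithinAt.closure_le (f := L) (g := fun _ => L x) hcl
        hc.continuousWithinAt continuousWithinAt_const
        (fun y hy => hm ⟨hy.1, hy.2.trans hx.2⟩ hx hy.2)
    constructor <;> linarith
  · have hle := hm hx hkm hx.2
    have hge : L x ≤ L ((k : ℝ) - dkP k) :=
      ContinuousWithinAt.closure_le (f := fun _ => L x) (g := L) hcl
        continuousWithinAt_const hc.continuousWithinAt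
        (fun y hy => hm ⟨hy.1, hy.2.trans hx.2⟩ hx hy.2)
    constructor <;> linarith

lemma gaussR_eq : gaussR = ProbabilityTheory.gaussianReal 0 1 := by
  rw [ProbabilityTheory.gaussianReal_of_var_ne_zero _ one_ne_zero, gaussR,
    ProbabilityTheory.gaussianPDF_def]
  congr 1
  funext x
  congr 1
  rw [ProbabilityTheory.gaussianPDFReal]
  simp only [NNReal.coe_one, mul_one, sub_zero]
  congr 1
  rw [Real.sqrt_eq_rpow, ← Real.rpow_neg (by positivity)]
  norm_num

instance : IsProbabilityMeasure gaussR := by rw [gaussR_eq]; infer_instance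

lemma integrable_exp_gaussR (t : ℝ) : Integrable (fun x => Real.exp (t * x)) gaussR := by
  rw [gaussR_eq]; exact ProbabilityTheory.integrable_exp_mul_gaussianReal t

lemma integral_exp_gaussR (t : ℝ) : ∫ x, Real.exp (t * x) ∂gaussR = Real.exp (t ^ 2 / 2) := by
  rw [gaussR_eq]
  have := ProbabilityTheory.mgf_gaussianReal (X := id) (p := ProbabilityTheory.gaussianReal 0 1)
    (μ := 0) (v := 1) (by simp) t
  simpa [ProbabilityTheory.mgf] using this

lemma measurable_ftilde {k : ℕ} {L : ℝ → ℝ} (hL : Admissible k L) : Measurable (ftilde k L) := by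
  have hc : Measurable L := hL.1.continuous.measurable
  have ha : Measurable fun x : ℝ => |x| := continuous_abs.measurable
  unfold ftilde
  refine Measurable.ite (measurableSet_le ha measurable_const) measurable_const
    (Measurable.ite (measurableSet_le ha measurable_const) (hc.comp ha) ?_)
  fun_prop

lemma dkP_le {k : ℕ} (hk : 1 ≤ k) : dkP k ≤ 1 := by
  have hk' : (1 : ℝ) ≤ k := by exact_mod_cast hk
  unfold dkP
  rw [div_le_one (by positivity)]; linarith

/-- A majorant of `|f̃_k − 1|`: the first two terms dominate the indicator of `|x| > k − 1`, the
last two dominate the exponential tail. Exponentials are used because their Gaussian integrals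
are explicit. -/
def ftildeErr (k : ℕ) (x : ℝ) : ℝ :=
  Real.exp (1 - k) * (Real.exp (1 * x) + Real.exp ((-1) * x)) +
    rkP k * Real.exp (-(bkP k ^ 2 / 2)) * (Real.exp (bkP k * x) + Real.exp ((-bkP k) * x))

lemma abs_ftilde_sub_one_le {k : ℕ} (hk : 1 ≤ k) {L : ℝ → ℝ} (hL : Admissible k L) (x : ℝ) :
    |ftilde k L x - 1| ≤ ftildeErr k x := by
  have hr0 : 0 ≤ rkP k := by unfold rkP; positivity
  have key : ∀ b : ℝ, Real.exp (b * |x|) ≤ Real.exp (b * x) + Real.exp ((-b) * x) := by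
    intro b
    rcases abs_cases x with ⟨h, _⟩ | ⟨h, _⟩ <;> rw [h]
    · linarith [Real.exp_pos ((-b) * x)]
    · have : b * -x = (-b) * x := by ring
      rw [this]; linarith [Real.exp_pos (b * x)]
  have h2 : 0 ≤ rkP k * Real.exp (-(bkP k ^ 2 / 2)) *
      (Real.exp (bkP k * x) + Real.exp ((-bkP k) * x)) := by positivity
  have h1 : 0 ≤ Real.exp (1 - k) * (Real.exp (1 * x) + Real.exp ((-1) * x)) := by positivity
  have hd := dkP_le hk
  have h3 : (k : ℝ) - dkP k < |x| →
      1 ≤ Real.exp (1 - k) * (Real.exp (1 * x) + Real.exp ((-1) * x)) := by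
    intro hx
    calc (1 : ℝ) ≤ Real.exp (1 - k + 1 * |x|) := Real.one_le_exp (by linarith)
      _ = Real.exp (1 - k) * Real.exp (1 * |x|) := Real.exp_add _ _
      _ ≤ _ := by gcongr; exact key 1
  unfold ftilde ftildeErr
  split_ifs with ha hb
  · simp only [sub_self, abs_zero]; linarith
  · have ha := not_le.1 ha
    have := admissible_mem_Icc hk hL ⟨ha, hb⟩
    have h3' := h3 ha
    rw [abs_le]; constructor <;> linarith
  · have ha := not_le.1 ha
    have h3' := h3 ha
    have h4 : rkP k * Real.exp (bkP k * |x| - bkP k ^ 2 / 2) ≤ rkP k * Real.exp (-(bkP k ^ 2 / 2)) *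
        (Real.exp (bkP k * x) + Real.exp ((-bkP k) * x)) := by
      rw [sub_eq_neg_add, Real.exp_add, ← mul_assoc]
      gcongr; exact key _
    have h5 : 0 ≤ rkP k * Real.exp (bkP k * |x| - bkP k ^ 2 / 2) := by positivity
    rw [abs_le]; constructor <;> linarith

lemma integrable_ftildeErr (k : ℕ) : Integrable (ftildeErr k) gaussR :=
  (((integrable_exp_gaussR _).add (integrable_exp_gaussR _)).const_mul _).add
    (((integrable_exp_gaussR _).add (integrable_exp_gaussR _)).const_mul _)

lemma integral_ftildeErr (k : ℕ) :
    ∫ x, ftildeErr k x ∂gaussR = 2 * Real.exp (1 / 2) * Real.exp (1 - k) + 2 * rkP k := by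
  unfold ftildeErr
  rw [integral_add (((integrable_exp_gaussR _).fun_add (integrable_exp_gaussR _)).const_mul _)
    (((integrable_exp_gaussR _).fun_add (integrable_exp_gaussR _)).const_mul _),
    integral_const_mul, integral_const_mul,
    integral_add (integrable_exp_gaussR _) (integrable_exp_gaussR _),
    integral_add (integrable_exp_gaussR _) (integrable_exp_gaussR _)]
  simp only [integral_exp_gaussR]
  have : Real.exp (-(bkP k ^ 2 / 2)) * Real.exp (bkP k ^ 2 / 2) = 1 := by
    rw [← Real.exp_add]; simp
  norm_num
  linear_combination (2 * rkP k) * this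

/-- The normalizing constant `‖f̃_k‖_{L¹(dγ)}` is close to `1`, at a rate independent of `L`. -/
lemma abs_norm_sub_one_le {k : ℕ} (hk : 1 ≤ k) {L : ℝ → ℝ} (hL : Admissible k L) :
    |(∫ y, ftilde k L y ∂gaussR) - 1| ≤
      2 * Real.exp (1 / 2) * Real.exp (1 - k) + 2 * rkP k := by
  have hi : Integrable (fun x => ftilde k L x - 1) gaussR :=
    (integrable_ftildeErr k).mono' ((measurable_ftilde hL).sub_const 1).aestronglyMeasurable
      (ae_of_all _ fun x => abs_ftilde_sub_one_le hk hL x)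
  have hi' : Integrable (ftilde k L) gaussR := by
    simpa using hi.fun_add (integrable_const (1 : ℝ))
  have h1 : (∫ y, ftilde k L y ∂gaussR) - 1 = ∫ y, (ftilde k L y - 1) ∂gaussR := by
    rw [integral_sub hi' (integrable_const _)]; simp
  rw [h1, ← integral_ftildeErr]
  rw [← Real.norm_eq_abs]
  exact norm_integral_le_of_norm_le (integrable_ftildeErr k)
    (ae_of_all _ fun x => abs_ftilde_sub_one_le hk hL x)

lemma tendsto_normErr : Tendsto
    (fun k : ℕ => 2 * Real.exp (1 / 2) * Real.exp (1 - k) + 2 * rkP k) atTop (𝓝 0) := by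
  have hk : Tendsto (fun k : ℕ => (k : ℝ)) atTop atTop := tendsto_natCast_atTop_atTop
  have h1 : Tendsto (fun k : ℕ => Real.exp (1 - (k : ℝ))) atTop (𝓝 0) :=
    Real.tendsto_exp_atBot.comp (tendsto_atBot_add_const_left _ 1
      (tendsto_neg_atTop_atBot.comp hk))
  have h2 : Tendsto rkP atTop (𝓝 0) := by
    unfold rkP
    exact tendsto_const_nhds.div_atTop
      ((Real.tendsto_sqrt_atTop.comp hk).const_mul_atTop (by norm_num))
  simpa using (h1.const_mul (2 * Real.exp (1 / 2))).add (h2.const_mul 2)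

/-! ### Ratios to the standard Gaussian and the weight -/

/-- The ratio `G_a / G_π`. -/
def Gratio (a x : ℝ) : ℝ := (a / π) ^ ((1 : ℝ) / 4) * Real.exp (-(a - π) * x ^ 2)

/-- The ratio `h_k / G_π`. -/
def hratio (k : ℕ) (L : ℝ → ℝ) (x : ℝ) : ℝ := Real.sqrt (fkc k L (2 * Real.sqrt π * x))

/-- The weight `G_π^{p−θ}` that appears once `G_π` is factored out of the `L^p(dm_θ)` norm. -/
def wgt (p θ x : ℝ) : ℝ := (2 : ℝ) ^ ((p - θ) / 4) * Real.exp (-((p - θ) * π) * x ^ 2)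

lemma Gpi_eq (x : ℝ) : Gfun π 0 x = (2 : ℝ) ^ ((1 : ℝ) / 4) * Real.exp (-π * x ^ 2) := by
  unfold Gfun
  rw [mul_div_cancel_right₀ _ Real.pi_ne_zero, sub_zero]

lemma Gpi_pos (x : ℝ) : 0 < Gfun π 0 x := by rw [Gpi_eq]; positivity

lemma Gfun_eq {a : ℝ} (ha : 0 ≤ a) (x : ℝ) : Gfun a 0 x = Gratio a x * Gfun π 0 x := by
  rw [Gpi_eq, Gratio, Gfun, mul_div_assoc, Real.mul_rpow (by norm_num) (by positivity)]
  have : Real.exp (-a * (x - 0) ^ 2) = Real.exp (-(a - π) * x ^ 2) * Real.exp (-π * x ^ 2) := by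
    rw [← Real.exp_add]; congr 1; ring
  rw [this]; ring

lemma Gratio_pi (x : ℝ) : Gratio π x = 1 := by
  simp [Gratio]

lemma wgt_eq (p θ x : ℝ) : wgt p θ x = Gfun π 0 x ^ (p - θ) := by
  rw [Gpi_eq, wgt, Real.mul_rpow (by positivity) (by positivity), ← Real.rpow_mul (by norm_num),
    ← Real.exp_mul]
  congr 2 <;> ring

lemma wgt_pos (p θ x : ℝ) : 0 < wgt p θ x := by unfold wgt; positivity

lemma continuous_wgt (p θ : ℝ) : Continuous (wgt p θ) := by unfold wgt; fun_prop

lemma integrable_wgt {p θ : ℝ} (h : θ < p) : Integrable (wgt p θ) :=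
  (integrable_exp_neg_mul_sq (mul_pos (sub_pos.2 h) Real.pi_pos)).const_mul _

lemma integrable_sq_wgt {p θ : ℝ} (h : θ < p) : Integrable (fun x => x ^ 2 * wgt p θ x) := by
  have := (integrable_rpow_mul_exp_neg_mul_sq (mul_pos (sub_pos.2 h) Real.pi_pos)
    (s := 2) (by norm_num)).const_mul ((2 : ℝ) ^ ((p - θ) / 4))
  refine this.congr (ae_of_all _ fun x => ?_)
  simp only [wgt, Real.rpow_two]; ring

lemma integral_mTheta_eq {p θ a : ℝ} (ha : 0 ≤ a) (k : ℕ) (L : ℝ → ℝ) :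
    ∫ x, |hkc k L x - Gfun a 0 x| ^ p ∂(mTheta θ) =
      ∫ x, |hratio k L x - Gratio a x| ^ p * wgt p θ x := by
  have hm : Measurable fun x => ENNReal.ofReal ((Gfun π 0 x) ^ (-θ)) := by
    unfold Gfun; fun_prop
  rw [mTheta, integral_withDensity_eq_integral_toReal_smul hm
    (ae_of_all _ fun x => ENNReal.ofReal_lt_top)]
  congr 1
  funext x
  have hg := Gpi_pos x
  rw [ENNReal.toReal_ofReal (by positivity), smul_eq_mul, Gfun_eq ha, hkc, ← hratio, ← sub_mul,
    abs_mul, abs_of_pos hg, Real.mul_rpow (abs_nonneg _) hg.le, wgt_eq, sub_eq_add_neg p,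
    Real.rpow_add hg]
  ring

lemma Gratio_nonneg {a : ℝ} (ha : 0 ≤ a) (x : ℝ) : 0 ≤ Gratio a x := by
  unfold Gratio; positivity

/-- For large `a`, the Gaussian `G_a` is at most `G_π / 4` outside `(-1, 1)`. -/
lemma exists_Gratio_le : ∃ a0 : ℝ, π < a0 ∧ ∀ a, a0 ≤ a → ∀ x : ℝ, 1 ≤ x ^ 2 →
    Gratio a x ≤ 1 / 4 := by
  have h := (tendsto_rpow_mul_exp_neg_mul_atTop_nhds_zero (1 / 4) π Real.pi_pos).mul_const
    (Real.exp π)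
  have h2 := h.comp (tendsto_id.atTop_div_const Real.pi_pos)
  rw [zero_mul] at h2
  obtain ⟨A, hA⟩ := eventually_atTop.1
    (h2.eventually (Iio_mem_nhds (show (0 : ℝ) < 1 / 4 by norm_num)))
  refine ⟨max A (π + 1), by simp, fun a ha x hx => ?_⟩
  have h3 := hA a ((le_max_left _ _).trans ha)
  have h4 : π + 1 ≤ a := (le_max_right _ _).trans ha
  have h5 : Gratio a x ≤ (a / π) ^ ((1 : ℝ) / 4) * Real.exp (-(a - π)) := by
    unfold Gratio
    have : 0 ≤ a / π := div_nonneg (by linarith [Real.pi_pos]) Real.pi_pos.le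
    gcongr
    nlinarith
  have h6 : (a / π) ^ ((1 : ℝ) / 4) * Real.exp (-(a - π)) =
      (a / π) ^ ((1 : ℝ) / 4) * Real.exp (-π * (a / π)) * Real.exp π := by
    rw [mul_assoc, ← Real.exp_add]; congr 2; field_simp; ring
  simp only [Function.comp, id] at h3
  linarith

/-! ### Integrability -/

lemma measurable_hratio {k : ℕ} {L : ℝ → ℝ} (hL : Admissible k L) : Measurable (hratio k L) := by
  unfold hratio fkc
  exact (((measurable_ftilde hL).comp (measurable_const_mul _)).div_const _).sqrt

/-- The `p`-th power of `|h_k / G_π − G_a / G_π|` grows at most like `e^{B|x|}`, so the Gaussian weight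
makes it integrable. -/
lemma integrable_diff {p θ a : ℝ} (hp : 0 ≤ p) (hθp : θ < p) (ha : π ≤ a) {k : ℕ} (hk : 1 ≤ k)
    {L : ℝ → ℝ} (hL : Admissible k L) (hc : 0 < ∫ y, ftilde k L y ∂gaussR) :
    Integrable (fun x => |hratio k L x - Gratio a x| ^ p * wgt p θ x) := by
  set c := ∫ y, ftilde k L y ∂gaussR with hcdef
  have ha0 : 0 ≤ a := Real.pi_pos.le.trans ha
  have hr0 : 0 ≤ rkP k := by unfold rkP; positivity
  have hb0 : 0 ≤ bkP k := by unfold bkP; positivity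
  -- `f̃_k ≤ (1 + r_k) e^{b_k |y|}`, and then `√u ≤ 1 + u`.
  have hf : ∀ y, ftilde k L y ≤ (1 + rkP k) * Real.exp (bkP k * |y|) := by
    intro y
    have h1 : 1 ≤ Real.exp (bkP k * |y|) := Real.one_le_exp (by positivity)
    have h2 : 0 ≤ rkP k * Real.exp (bkP k * |y|) := by positivity
    unfold ftilde
    split_ifs with h3 h4
    · linarith
    · have := (admissible_mem_Icc hk hL ⟨not_le.1 h3, h4⟩).2
      linarith
    · have : Real.exp (bkP k * |y| - bkP k ^ 2 / 2) ≤ Real.exp (bkP k * |y|) :=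
        Real.exp_le_exp.2 (by nlinarith [sq_nonneg (bkP k)])
      nlinarith
  obtain ⟨M, B, hM, hB, hMB⟩ : ∃ M B : ℝ, 0 ≤ M ∧ 0 ≤ B ∧
      ∀ x, |hratio k L x - Gratio a x| ≤ M * Real.exp (B * |x|) := by
    refine ⟨1 + (1 + rkP k) / c + (a / π) ^ ((1 : ℝ) / 4), bkP k * (2 * Real.sqrt π),
      by positivity, by positivity, fun x => ?_⟩
    set E := Real.exp (bkP k * (2 * Real.sqrt π) * |x|) with hE
    have hE1 : 1 ≤ E := Real.one_le_exp (by positivity)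
    have hs0 : 0 ≤ hratio k L x := Real.sqrt_nonneg _
    have hs : hratio k L x ≤ E + (1 + rkP k) / c * E := by
      have h1 : fkc k L (2 * Real.sqrt π * x) ≤ (1 + rkP k) / c * E := by
        unfold fkc
        rw [← hcdef, div_mul_eq_mul_div]
        gcongr
        refine (hf _).trans_eq ?_
        rw [hE, abs_mul, abs_of_nonneg (by positivity : 0 ≤ 2 * Real.sqrt π), mul_assoc (bkP k)]
      have h2 : 0 ≤ (1 + rkP k) / c * E := by positivity
      unfold hratio
      refine (Real.sqrt_le_sqrt h1).trans ?_
      refine Real.sqrt_le_iff.2 ⟨by linarith, ?_⟩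
      nlinarith
    have ht0 := Gratio_nonneg ha0 x
    have ht : Gratio a x ≤ (a / π) ^ ((1 : ℝ) / 4) * E := by
      unfold Gratio
      gcongr
      refine (Real.exp_le_one_iff.2 ?_).trans hE1
      nlinarith [sq_nonneg x]
    have ht1 : 0 ≤ (a / π) ^ ((1 : ℝ) / 4) * E := by positivity
    rw [abs_le]; constructor <;> linarith
  set q := (p - θ) * π with hq
  have hq0 : 0 < q := mul_pos (sub_pos.2 hθp) Real.pi_pos
  have hmeas : Measurable fun x => |hratio k L x - Gratio a x| ^ p * wgt p θ x := by
    have h1 := measurable_hratio hL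
    have h2 : Measurable (Gratio a) := by unfold Gratio; fun_prop
    have h3 := (continuous_wgt p θ).measurable
    have h4 : Measurable fun x => |hratio k L x - Gratio a x| :=
      continuous_abs.measurable.comp (h1.sub h2)
    exact (h4.pow_const p).mul h3
  refine ((integrable_exp_neg_mul_sq (half_pos hq0)).const_mul
    (M ^ p * (2 : ℝ) ^ ((p - θ) / 4) * Real.exp ((p * B) ^ 2 / (2 * q)))).mono'
    hmeas.aestronglyMeasurable (ae_of_all _ fun x => ?_)
  have hw := wgt_pos p θ x
  rw [Real.norm_of_nonneg (by positivity)]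
  have h1 : |hratio k L x - Gratio a x| ^ p ≤ M ^ p * Real.exp (p * B * |x|) := by
    refine (Real.rpow_le_rpow (abs_nonneg _) (hMB x) hp).trans_eq ?_
    rw [Real.mul_rpow hM (Real.exp_pos _).le, ← Real.exp_mul]
    congr 2; ring
  -- Completing the square: `pB|x| ≤ (pB)²/(2q) + q x²/2`.
  have h2 : p * B * |x| + -q * x ^ 2 ≤ (p * B) ^ 2 / (2 * q) + -(q / 2) * x ^ 2 := by
    have h3 : (p * B) ^ 2 / (2 * q) + -(q / 2) * x ^ 2 - (p * B * |x| + -q * x ^ 2) =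
        (p * B - q * |x|) ^ 2 / (2 * q) := by
      rw [← sq_abs x]; field_simp; ring
    have : 0 ≤ (p * B - q * |x|) ^ 2 / (2 * q) := by positivity
    linarith
  calc |hratio k L x - Gratio a x| ^ p * wgt p θ x
      ≤ M ^ p * Real.exp (p * B * |x|) * ((2 : ℝ) ^ ((p - θ) / 4) * Real.exp (-q * x ^ 2)) := by
        unfold wgt; gcongr
    _ = M ^ p * (2 : ℝ) ^ ((p - θ) / 4) * Real.exp (p * B * |x| + -q * x ^ 2) := by
        rw [Real.exp_add]; ring
    _ ≤ M ^ p * (2 : ℝ) ^ ((p - θ) / 4) *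
          Real.exp ((p * B) ^ 2 / (2 * q) + -(q / 2) * x ^ 2) := by gcongr
    _ = _ := by rw [Real.exp_add]; ring

/-! ### Pointwise comparison -/

/-- In the bulk `|2√π x| ≤ k − d_k` the left side is at most the small number `ε`, and on `[1, 2]` the
right side gains `4^{-p}`. Beyond the bulk, either `h_k ≥ G_π ≥ G_a`, so that replacing `G_π`
by `G_a` enlarges the difference, or `0 ≤ h_k ≤ G_π` and the left side is at most `1`. -/
lemma pointwise_le {p a ε : ℝ} (hp : 0 < p)
    (hG : ∀ x : ℝ, 1 ≤ x ^ 2 → Gratio a x ≤ 1 / 4) {k : ℕ} (hk : 10 ≤ k) {L : ℝ → ℝ}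
    (hη : |Real.sqrt (1 / ∫ y, ftilde k L y ∂gaussR) - 1| ^ p ≤ ε)
    (hhalf : 1 / 2 ≤ Real.sqrt (1 / ∫ y, ftilde k L y ∂gaussR)) (x : ℝ) :
    |hratio k L x - 1| ^ p ≤ |hratio k L x - Gratio a x| ^ p + ε
      + 4 * π / ((k : ℝ) - 1) ^ 2 * x ^ 2
      - (Set.Icc (1 : ℝ) 2).indicator (fun _ => (1 / 4) ^ p) x := by
  have hk' : (10 : ℝ) ≤ k := by exact_mod_cast hk
  have hd := dkP_le (k := k) (by omega)
  have hsp : Real.sqrt π < 2 := by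
    rw [Real.sqrt_lt' (by norm_num)]; linarith [Real.pi_lt_d2]
  have hsp0 : 0 < Real.sqrt π := Real.sqrt_pos.2 Real.pi_pos
  have hsq : Real.sqrt π ^ 2 = π := Real.sq_sqrt Real.pi_pos.le
  have hε : 0 ≤ ε := le_trans (by positivity) hη
  have hyabs : |2 * Real.sqrt π * x| = 2 * Real.sqrt π * |x| := by
    rw [abs_mul, abs_of_nonneg (by positivity : 0 ≤ 2 * Real.sqrt π)]
  have hquad : 0 ≤ 4 * π / ((k : ℝ) - 1) ^ 2 * x ^ 2 := by positivity
  have hpow : 0 ≤ |hratio k L x - Gratio a x| ^ p := by positivity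
  by_cases hx : |2 * Real.sqrt π * x| ≤ (k : ℝ) - dkP k
  · have hs : hratio k L x = Real.sqrt (1 / ∫ y, ftilde k L y ∂gaussR) := by
      rw [hratio, fkc, ftilde, if_pos hx]
    have h1 : |hratio k L x - 1| ^ p ≤ ε := by rw [hs]; exact hη
    by_cases hx2 : x ∈ Set.Icc (1 : ℝ) 2
    · rw [Set.indicator_of_mem hx2]
      have h2 := hG x (by nlinarith [hx2.1])
      have h3 : (1 / 4 : ℝ) ^ p ≤ |hratio k L x - Gratio a x| ^ p := by
        refine Real.rpow_le_rpow (by norm_num) ?_ hp.le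
        refine le_trans ?_ (le_abs_self _)
        rw [hs]; linarith
      linarith
    · rw [Set.indicator_of_notMem hx2]; linarith
  · have hx' := not_le.1 hx
    rw [hyabs] at hx'
    have hx9 : (k : ℝ) - 1 < 2 * Real.sqrt π * |x| := by linarith
    have hx2 : 2 < |x| := by nlinarith [abs_nonneg x]
    have hnot : x ∉ Set.Icc (1 : ℝ) 2 := fun h => by
      rw [abs_of_nonneg (by linarith [h.1])] at hx2; linarith [h.2]
    rw [Set.indicator_of_notMem hnot]
    have hG' := hG x (by rw [← sq_abs]; nlinarith)
    have hs0 : 0 ≤ hratio k L x := Real.sqrt_nonneg _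
    rcases le_total 1 (hratio k L x) with h1 | h1
    · have : |hratio k L x - 1| ^ p ≤ |hratio k L x - Gratio a x| ^ p := by
        refine Real.rpow_le_rpow (abs_nonneg _) ?_ hp.le
        rw [abs_of_nonneg (by linarith), abs_of_nonneg (by linarith)]
        linarith
      linarith
    · have h2 : |hratio k L x - 1| ^ p ≤ 1 := by
        refine Real.rpow_le_one (abs_nonneg _) ?_ hp.le
        rw [abs_le]; constructor <;> linarith
      have h3 : 1 ≤ 4 * π / ((k : ℝ) - 1) ^ 2 * x ^ 2 := by
        rw [div_mul_eq_mul_div, one_le_div (by nlinarith)]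
        have : ((k : ℝ) - 1) ^ 2 ≤ (2 * Real.sqrt π * |x|) ^ 2 := by
          gcongr; linarith
        calc _ ≤ _ := this
          _ = 4 * (Real.sqrt π ^ 2) * |x| ^ 2 := by ring
          _ = _ := by rw [hsq, sq_abs]
      linarith

/-! ### The comparison of norms -/

/-- For the explicit construction, far-out Gaussians are farther from `h_k` than `G_π`
in `L^p(dm_θ)`: `‖h_k − G_a‖ ≥ ‖h_k − G_π‖` for all `a ≥ a_0` and `k ≥ k_0`. -/
theorem hk_dist_Ga_ge_Gpi (p θ : ℝ) (hp2 : 2 < p) (hθ : 0 < θ) (hθp : θ < p) :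
    ∃ (k0 : ℕ) (a0 : ℝ), π < a0 ∧
      ∀ k : ℕ, k0 ≤ k → ∀ a : ℝ, a0 ≤ a → ∀ L : ℝ → ℝ, Admissible k L →
        LpNormR p (mTheta θ) (fun x => hkc k L x - Gfun π 0 x)
          ≤ LpNormR p (mTheta θ) (fun x => hkc k L x - Gfun a 0 x) := by
  have hp : 0 < p := by linarith
  obtain ⟨a0, ha0, hG⟩ := exists_Gratio_le
  set W0 := ∫ x, wgt p θ x with hW0
  set W2 := ∫ x, x ^ 2 * wgt p θ x with hW2
  set m := (1 / 4 : ℝ) ^ p * ∫ x in Set.Icc (1 : ℝ) 2, wgt p θ x with hm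
  have hW0n : 0 ≤ W0 := integral_nonneg fun x => (wgt_pos p θ x).le
  have hmpos : 0 < m := by
    have : 0 < ∫ x in Set.Icc (1 : ℝ) 2, wgt p θ x := by
      rw [setIntegral_pos_iff_support_of_nonneg_ae (ae_of_all _ fun x => (wgt_pos p θ x).le)
        (integrable_wgt hθp).integrableOn]
      rw [Function.support_eq_univ (fun x => (wgt_pos p θ x).ne'), Set.univ_inter]
      simp
    positivity
  set ε := m / (2 * (W0 + 1)) with hε
  have hεpos : 0 < ε := by positivity
  have hεW : ε * W0 ≤ m / 2 := by
    rw [hε, div_mul_eq_mul_div, div_le_div_iff₀ (by positivity) (by norm_num)]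
    nlinarith
  -- The conditions imposed on the normalizing constant `c` hold near `c = 1`.
  have hcont : ContinuousAt (fun c : ℝ => Real.sqrt (1 / c)) 1 := by
    refine ContinuousAt.sqrt ?_
    exact continuousAt_const.div continuousAt_id one_ne_zero
  have hev1 : ∀ᶠ c in 𝓝 (1 : ℝ), |Real.sqrt (1 / c) - 1| ^ p < ε := by
    have h : ContinuousAt (fun c : ℝ => |Real.sqrt (1 / c) - 1| ^ p) 1 :=
      ((hcont.sub continuousAt_const).abs).rpow_const (Or.inr hp.le)
    refine h.eventually (Iio_mem_nhds ?_)
    simpa [Real.zero_rpow hp.ne'] using hεpos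
  have hev2 : ∀ᶠ c in 𝓝 (1 : ℝ), 1 / 2 < Real.sqrt (1 / c) :=
    hcont.eventually (Ioi_mem_nhds (by norm_num))
  obtain ⟨δ, hδ, hball⟩ := Metric.eventually_nhds_iff.1
    ((hev1.and hev2).and (Ioi_mem_nhds (zero_lt_one (α := ℝ))))
  have hk1 := tendsto_normErr.eventually (Iio_mem_nhds hδ)
  have hk2 : ∀ᶠ k : ℕ in atTop, 4 * π / ((k : ℝ) - 1) ^ 2 * W2 < m / 2 := by
    have hk : Tendsto (fun k : ℕ => (k : ℝ) - 1) atTop atTop :=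
      tendsto_atTop_add_const_right _ (-1) tendsto_natCast_atTop_atTop
    have h := ((tendsto_const_nhds (x := 4 * π)).div_atTop
      ((tendsto_pow_atTop two_ne_zero).comp hk)).mul_const W2
    rw [zero_mul] at h
    exact h.eventually (Iio_mem_nhds (half_pos hmpos))
  obtain ⟨k0, hk0⟩ := eventually_atTop.1 ((hk1.and hk2).and (eventually_ge_atTop 10))
  refine ⟨k0, a0, ha0, fun k hk a ha L hL => ?_⟩
  obtain ⟨⟨hkδ, hkW⟩, hk10⟩ := hk0 k hk
  have hk1' : 1 ≤ k := by omega
  have hdist : dist (∫ y, ftilde k L y ∂gaussR) 1 < δ := by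
    rw [Real.dist_eq]; exact (abs_norm_sub_one_le hk1' hL).trans_lt hkδ
  obtain ⟨⟨hη, hhalf⟩, hcpos⟩ := hball hdist
  have hπa : π ≤ a := ha0.le.trans ha
  have ha' : 0 ≤ a := Real.pi_pos.le.trans hπa
  unfold LpNormR
  rw [integral_mTheta_eq ha', integral_mTheta_eq Real.pi_pos.le]
  refine Real.rpow_le_rpow
    (integral_nonneg fun x => mul_nonneg (by positivity) (wgt_pos p θ x).le) ?_ (by positivity)
  have hIa := integrable_diff hp.le hθp hπa hk1' hL hcpos
  have hI0 := (integrable_wgt hθp).const_mul ε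
  have hI2 := (integrable_sq_wgt hθp).const_mul (4 * π / ((k : ℝ) - 1) ^ 2)
  have hI3 : Integrable (fun x => (Set.Icc (1 : ℝ) 2).indicator
      (fun x => (1 / 4 : ℝ) ^ p * wgt p θ x) x) :=
    ((integrable_wgt hθp).const_mul _).indicator measurableSet_Icc
  have hmain : ∫ x, |hratio k L x - Gratio π x| ^ p * wgt p θ x ≤
      ∫ x, (|hratio k L x - Gratio a x| ^ p * wgt p θ x + ε * wgt p θ x
        + 4 * π / ((k : ℝ) - 1) ^ 2 * (x ^ 2 * wgt p θ x)
        - (Set.Icc (1 : ℝ) 2).indicator (fun x => (1 / 4 : ℝ) ^ p * wgt p θ x) x) := by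
    refine integral_mono_of_nonneg
      (ae_of_all _ fun x => mul_nonneg (by positivity) (wgt_pos p θ x).le)
      (((hIa.add hI0).add hI2).sub hI3) (ae_of_all _ fun x => ?_)
    have h := mul_le_mul_of_nonneg_right
      (pointwise_le hp (hG a ha) hk10 hη.le hhalf.le x) (wgt_pos p θ x).le
    have hind : (Set.Icc (1 : ℝ) 2).indicator (fun x => (1 / 4 : ℝ) ^ p * wgt p θ x) x =
        (Set.Icc (1 : ℝ) 2).indicator (fun _ => (1 / 4 : ℝ) ^ p) x * wgt p θ x := by
      by_cases hx : x ∈ Set.Icc (1 : ℝ) 2 <;> simp [hx]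
    simp only [Gratio_pi, hind]
    refine h.trans_eq ?_
    ring
  rw [integral_sub ((hIa.fun_add hI0).fun_add hI2) hI3, integral_add (hIa.fun_add hI0) hI2,
    integral_add hIa hI0, integral_const_mul, integral_const_mul,
    integral_indicator measurableSet_Icc, integral_const_mul] at hmain
  linarith
end
end

section
/- Let n ≥ 1, p ∈ [1, 2), M > n, and 0 < α < 2p/(2 − p). There exists a sequence of centered probability measures μ_k on ℝⁿ with m_2(μ_k) ≤ M such that δ(μ_k) → 0, W_p(μ_k, γ) → 0 with W_p(μ_k, γ) > 0 for all k, and δ(μ_k) / W_p(μ_k, γ)^α → 0 as k → ∞. Hence the exponent in any stability bound δ(μ) ≥ C·W_p(μ, γ)^β on this class must satisfy β ≥ 2p/(2 − p). -/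
/-!
The examples are mixtures `μ = (1 - ε) γ + (ε/2) γ(· - be) + (ε/2) γ(· + be)` with `e` a unit
vector, `ε = c / b²`, `c = min (M - n) 1` and `b → ∞`. They are centered, and their second moment
is `n + ε b² = n + c ≤ M` (`mixDens_centered`, `mixDens_moment`).

*Deficit.* Translates of `γ` have zero deficit: entropy `b²/2` and Fisher information `b²`. Hence
the deficit of `μ` only measures how far entropy and Fisher information are from being affine on
the mixture. By convexity the Fisher information is at most `ε b²`; since `f` dominates each of
its weighted components, the entropy is at least `ε b² / 2` minus the Shannon entropy of the
weights. So the deficit is at most of order `ε log (1/ε)`. The logarithmic Sobolev inequality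
itself is not needed for the lower bound: `y log y` is convex, and the components are almost
mutually singular, so that the Fisher information is at least `ε b² - O(b² exp (-b²/8))`. Both
directions are in `mixDens_deficit`. The density depends only on `⟪e, x⟫`, so all of this takes
place on the line, with the profile `bump` and the measure `N(0, 1)`.

*Wasserstein distance.* `W_p(μ, γ)^p` is of order `ε b^p = c b^(p-2)`: the coupling that translates
the two small components back gives the upper bound, and any plan must carry mass of order `ε`
from beyond `b/2` to below `b/4`, the Gaussian mass beyond `b/4` being negligible
(`mixDens_cost_upper`, `mixDens_cost_lower`). Consequently `W_p → 0` because `p < 2`, and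
`δ / W_p^α` is at most of order `b^(α(2-p)/p - 2) log b`, which tends to `0` exactly because
`α < 2p/(2-p)` (`mixDens_family`).
-/

open MeasureTheory Filter Real Topology

noncomputable section

/-- Euclidean space `ℝⁿ`. -/
abbrev En (n : ℕ) := EuclideanSpace ℝ (Fin n)

/-- The standard Gaussian measure `dγ = (2π)^{-n/2} e^{-|x|²/2} dx` on `ℝⁿ`. -/
def stdGauss (n : ℕ) : Measure (En n) :=
  (volume : Measure (En n)).withDensity
    (fun x => ENNReal.ofReal ((2 * π) ^ (-(n : ℝ) / 2) * Real.exp (-‖x‖ ^ 2 / 2)))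

/-- The probability measure `dμ = f dγ` with density `f` with respect to the Gaussian. -/
def densMeasure {n : ℕ} (f : En n → ℝ) : Measure (En n) :=
  (stdGauss n).withDensity (fun x => ENNReal.ofReal (f x))

/-- Relative entropy `H(μ) = ∫ f log f dγ` of `dμ = f dγ`. -/
def relEnt {n : ℕ} (f : En n → ℝ) : ℝ :=
  ∫ x, f x * Real.log (f x) ∂(stdGauss n)

/-- Fisher information `I(μ) = ∫ |∇f|²/f dγ` of `dμ = f dγ`. -/
def fisherInfo {n : ℕ} (f : En n → ℝ) : ℝ :=
  ∫ x, ‖gradient f x‖ ^ 2 / f x ∂(stdGauss n)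

/-- Deficit of the logarithmic Sobolev inequality, `δ(μ) = I(μ)/2 − H(μ)`. -/
def lsiDeficit {n : ℕ} (f : En n → ℝ) : ℝ :=
  fisherInfo f / 2 - relEnt f

/-- The `p`-th moment `m_p(μ) = ∫ |x|^p dμ`. -/
def moment {n : ℕ} (p : ℝ) (μ : Measure (En n)) : ℝ := ∫ x, ‖x‖ ^ p ∂μ

/-- A measure is centered if `∫ x dμ = 0`. -/
def IsCentered {n : ℕ} (μ : Measure (En n)) : Prop := (∫ x, x ∂μ) = 0

/-- `π'` is a coupling of `μ` and `ν`. -/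
def IsCoupling {n : ℕ} (π' : Measure (En n × En n)) (μ ν : Measure (En n)) : Prop :=
  IsProbabilityMeasure π' ∧ π'.map Prod.fst = μ ∧ π'.map Prod.snd = ν

/-- Wasserstein distance of order `p`:
`W_p(μ,ν) = inf_π (∫∫ |x−y|^p dπ)^{1/p}` over couplings `π`. -/
def wasserstein {n : ℕ} (p : ℝ) (μ ν : Measure (En n)) : ℝ :=
  ((⨅ (π' : Measure (En n × En n)) (_ : IsCoupling π' μ ν),
      ∫⁻ z, ENNReal.ofReal (‖z.1 - z.2‖ ^ p) ∂π') ^ (1 / p)).toReal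

/-- Deficit of Talagrand's inequality, `δ_Tal(μ) = 2H(μ) − W₂²(μ,γ)` for `dμ = f dγ`. -/
def talDeficit {n : ℕ} (f : En n → ℝ) : ℝ :=
  2 * relEnt f - wasserstein 2 (densMeasure f) (stdGauss n) ^ 2

/-- The `L^p(dμ)` norm of a real function. -/
def LpNorm {n : ℕ} (p : ℝ) (μ : Measure (En n)) (u : En n → ℝ) : ℝ :=
  (∫ x, |u x| ^ p ∂μ) ^ (1 / p)

/-! ### The standard Gaussian measure -/

section Sharpness

open ProbabilityTheory
open scoped RealInnerProductSpace

lemma gaussDens_measurable (n : ℕ) : Measurable (fun x : En n =>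
    ENNReal.ofReal ((2 * π) ^ (-(n : ℝ) / 2) * Real.exp (-‖x‖ ^ 2 / 2))) := by
  fun_prop

lemma stdGauss_integral (n : ℕ) (g : En n → ℂ) :
    ∫ x, g x ∂(stdGauss n) =
      ∫ x, (((2 * π) ^ (-(n : ℝ) / 2) * Real.exp (-‖x‖ ^ 2 / 2) : ℝ) : ℂ) * g x := by
  rw [stdGauss, integral_withDensity_eq_integral_toReal_smul (gaussDens_measurable n)
    (ae_of_all _ fun _ => ENNReal.ofReal_lt_top)]
  refine integral_congr_ae (ae_of_all _ fun x => ?_)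
  simp only
  rw [ENNReal.toReal_ofReal (by positivity), Complex.real_smul]

/-- The explicit density gives the measure `stdGaussian` of Mathlib; proved by comparing
characteristic functions. -/
lemma stdGauss_eq (n : ℕ) : stdGauss n = stdGaussian (En n) := by
  have hfin : IsFiniteMeasure (stdGauss n) := by
    refine isFiniteMeasure_withDensity_ofReal ?_
    have h := (GaussianFourier.integrable_cexp_neg_mul_sq_norm_add (V := En n)
      (b := (1 / 2 : ℂ)) (by norm_num) 0 0).norm
    refine (Integrable.const_mul (h.congr (ae_of_all _ fun x => ?_)) _).hasFiniteIntegral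
    simp only [Complex.norm_exp]
    congr 1
    have : (-(1 / 2 : ℂ) * (‖x‖ : ℂ) ^ 2 + 0 * ((⟪(0 : En n), x⟫ : ℝ) : ℂ))
        = ((-‖x‖ ^ 2 / 2 : ℝ) : ℂ) := by push_cast; ring
    rw [this, Complex.ofReal_re]
  refine Measure.ext_of_charFun ?_
  ext t
  rw [charFun_stdGaussian, charFun_apply, stdGauss_integral]
  have h := GaussianFourier.integral_cexp_neg_mul_sq_norm_add (V := En n)
      (b := (1 / 2 : ℂ)) (by norm_num) Complex.I t
  have h2 : ∀ x : En n, (((2 * π) ^ (-(n : ℝ) / 2) * Real.exp (-‖x‖ ^ 2 / 2) : ℝ) : ℂ) *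
      Complex.exp (⟪x, t⟫ * Complex.I) = (((2 * π) ^ (-(n : ℝ) / 2) : ℝ) : ℂ) *
      Complex.exp (-(1 / 2 : ℂ) * (‖x‖ : ℂ) ^ 2 + Complex.I * ((⟪t, x⟫ : ℝ) : ℂ)) := by
    intro x
    rw [Complex.ofReal_mul, mul_assoc, Complex.ofReal_exp, ← Complex.exp_add, real_inner_comm]
    congr 2
    push_cast
    ring
  simp_rw [h2]
  rw [integral_const_mul, h, ← mul_assoc]
  have h3 : (((2 * π) ^ (-(n : ℝ) / 2) : ℝ) : ℂ) *
      ((π : ℂ) / (1 / 2)) ^ ((Module.finrank ℝ (En n) : ℂ) / 2) = 1 := by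
    have e1 : ((π : ℂ) / (1 / 2)) = ((2 * π : ℝ) : ℂ) := by push_cast; ring
    have e2 : ((Module.finrank ℝ (En n) : ℂ) / 2) = (((n : ℝ) / 2 : ℝ) : ℂ) := by
      simp
    rw [e1, e2, ← Complex.ofReal_cpow (by positivity), ← Complex.ofReal_mul,
      ← Real.rpow_add (by positivity)]
    norm_num [neg_div]
  rw [h3, one_mul]
  congr 1
  rw [Complex.I_sq]
  ring

instance (n : ℕ) : IsProbabilityMeasure (stdGauss n) := by
  rw [stdGauss_eq]; infer_instance

instance (n : ℕ) : IsGaussian (stdGauss n) := by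
  rw [stdGauss_eq]; infer_instance

lemma stdGauss_map_inner {n : ℕ} {e : En n} (he : ‖e‖ = 1) :
    (stdGauss n).map (fun x => ⟪e, x⟫) = gaussianReal 0 1 := by
  have h := IsGaussian.map_eq_gaussianReal (μ := stdGauss n) (innerSL ℝ e)
  have h0 : (stdGauss n)[innerSL ℝ e] = 0 := by
    rw [stdGauss_eq]; exact integral_strongDual_stdGaussian _
  have h1 : Var[innerSL ℝ e; stdGauss n] = 1 := by
    rw [stdGauss_eq, variance_dual_stdGaussian, innerSL_apply_norm, he]; norm_num
  rw [h0, h1] at h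
  simpa using h

lemma stdGauss_inner_integrable {n : ℕ} (v : En n) :
    Integrable (fun x => ⟪v, x⟫) (stdGauss n) :=
  (innerSL ℝ v).integrable_comp IsGaussian.integrable_id

lemma stdGauss_integral_inner {n : ℕ} (v : En n) : ∫ x, ⟪v, x⟫ ∂(stdGauss n) = 0 := by
  rw [stdGauss_eq]; exact integral_strongDual_stdGaussian (innerSL ℝ v)

lemma stdGauss_integrable_sq (n : ℕ) : Integrable (fun x => ‖x‖ ^ 2) (stdGauss n) :=
  IsGaussian.memLp_two_id.integrable_norm_pow (by norm_num)

lemma stdGauss_integral_sq (n : ℕ) : ∫ x, ‖x‖ ^ 2 ∂(stdGauss n) = n := by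
  have hb := fun x : En n => (EuclideanSpace.basisFun (Fin n) ℝ).sum_sq_inner_right x
  have hint : ∀ i, ∫ x, ⟪EuclideanSpace.basisFun (Fin n) ℝ i, x⟫ ^ 2 ∂(stdGauss n) = 1 := by
    intro i
    have h := stdGauss_map_inner (e := EuclideanSpace.basisFun (Fin n) ℝ i)
      ((EuclideanSpace.basisFun (Fin n) ℝ).norm_eq_one i)
    have h2 : ∫ y, y ^ 2 ∂(gaussianReal 0 1) = 1 := by
      have := variance_id_gaussianReal (μ := 0) (v := 1)
      rw [variance_eq_integral (by fun_prop)] at this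
      simpa using this
    rw [← h, integral_map (by fun_prop) (by fun_prop)] at h2
    exact h2
  simp_rw [← hb]
  rw [integral_finsetSum]
  · rw [Finset.sum_congr rfl fun i _ => hint i]; simp
  · intro i _
    refine (stdGauss_integrable_sq n).mono' (by fun_prop) (ae_of_all _ fun x => ?_)
    rw [← hb x, Real.norm_of_nonneg (by positivity)]
    exact Finset.single_le_sum (f := fun i => ⟪EuclideanSpace.basisFun (Fin n) ℝ i, x⟫ ^ 2)
      (fun j _ => by positivity) (Finset.mem_univ i)

/-- Cameron–Martin formula for the standard Gaussian. -/
lemma stdGauss_map_add {n : ℕ} (v : En n) :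
    (stdGauss n).map (fun x => x + v) =
      (stdGauss n).withDensity (fun x => ENNReal.ofReal (Real.exp (⟪v, x⟫ - ‖v‖ ^ 2 / 2))) := by
  ext A hA
  rw [Measure.map_apply (by fun_prop) hA, withDensity_apply _ hA, stdGauss,
    restrict_withDensity hA, lintegral_withDensity_eq_lintegral_mul _ (gaussDens_measurable n)
      (by fun_prop), withDensity_apply _ (hA.preimage (by fun_prop)),
    ← lintegral_indicator hA, ← lintegral_indicator (hA.preimage (by fun_prop)),
    ← lintegral_sub_right_eq_self _ v]
  refine lintegral_congr fun x => ?_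
  by_cases hx : x ∈ A
  · have hx' : x - v ∈ (fun x => x + v) ⁻¹' A := by simpa using hx
    rw [Set.indicator_of_mem hx, Set.indicator_of_mem hx', Pi.mul_apply,
      ← ENNReal.ofReal_mul (by positivity), mul_assoc, ← Real.exp_add, norm_sub_sq_real,
      real_inner_comm]
    congr 3
    ring
  · have hx' : x - v ∉ (fun x => x + v) ⁻¹' A := by simpa using hx
    rw [Set.indicator_of_notMem hx, Set.indicator_of_notMem hx']

/-! ### The one-dimensional profile: entropy and Fisher information -/

/-- Density of `N(t, 1)` with respect to `N(0, 1)`. -/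
def tilt (t x : ℝ) : ℝ := Real.exp (t * x - t ^ 2 / 2)

/-- One-dimensional profile of the three-bump mixture
`(1 - ε) N(0,1) + (ε/2) N(b,1) + (ε/2) N(-b,1)`. -/
def bump (ε b x : ℝ) : ℝ := 1 - ε + ε / 2 * (tilt b x + tilt (-b) x)

lemma tilt_pos (t x : ℝ) : 0 < tilt t x := Real.exp_pos _

lemma tilt_continuous (t : ℝ) : Continuous (tilt t) := by unfold tilt; fun_prop

lemma tilt_eq (t x : ℝ) : tilt t x = Real.exp (-(t ^ 2 / 2)) * Real.exp (t * x) := by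
  rw [tilt, ← Real.exp_add]; ring_nf

lemma tilt_integrable (t : ℝ) : Integrable (tilt t) (gaussianReal 0 1) := by
  rw [funext (tilt_eq t)]
  exact (integrable_exp_mul_gaussianReal t).const_mul _

lemma tilt_integral (t : ℝ) : ∫ x, tilt t x ∂(gaussianReal 0 1) = 1 := by
  simp_rw [tilt_eq t]
  have h := congrFun (mgf_id_gaussianReal (μ := 0) (v := 1)) t
  simp only [mgf, id] at h
  rw [integral_const_mul, h, ← Real.exp_add]
  simp

lemma mul_tilt_integrable (t : ℝ) : Integrable (fun x => x * tilt t x) (gaussianReal 0 1) := by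
  have h := integrable_pow_mul_exp_of_mem_interior_integrableExpSet
    (X := id) (μ := gaussianReal 0 1) (v := t) (by simp) 1
  refine (h.const_mul (Real.exp (-(t ^ 2 / 2)))).congr (ae_of_all _ fun x => ?_)
  simp only [tilt_eq, id, pow_one]
  ring

lemma mul_tilt_integral (t : ℝ) : ∫ x, x * tilt t x ∂(gaussianReal 0 1) = t := by
  have h := hasDerivAt_mgf (X := id) (μ := gaussianReal 0 1) (t := t) (by simp)
  rw [mgf_id_gaussianReal] at h
  have h2 : HasDerivAt (fun t : ℝ => Real.exp ((0 : ℝ) * t + ((1 : NNReal) : ℝ) * t ^ 2 / 2))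
      (Real.exp (t ^ 2 / 2) * t) t := by
    have : HasDerivAt (fun t : ℝ => (0 : ℝ) * t + ((1 : NNReal) : ℝ) * t ^ 2 / 2) t t := by
      have h3 := ((hasDerivAt_pow 2 t).div_const 2)
      simpa using h3
    simpa using this.exp
  have h4 := h.unique h2
  simp only [id] at h4
  have h5 : ∀ x, x * tilt t x = Real.exp (-(t ^ 2 / 2)) * (x * Real.exp (t * x)) := by
    intro x; rw [tilt_eq]; ring
  simp_rw [h5]
  rw [integral_const_mul, h4, ← mul_assoc, ← Real.exp_add]
  simp

lemma bump_pos {ε b : ℝ} (h0 : 0 < ε) (h1 : ε < 1) (x : ℝ) : 0 < bump ε b x := by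
  have := tilt_pos b x
  have := tilt_pos (-b) x
  unfold bump
  have : 0 < 1 - ε := by linarith
  positivity

lemma bump_continuous (ε b : ℝ) : Continuous (bump ε b) := by
  have := tilt_continuous b
  have := tilt_continuous (-b)
  unfold bump; fun_prop

lemma bump_mul (ε b x L : ℝ) : bump ε b x * L =
    (1 - ε) * L + (ε / 2) * (tilt b x * L) + (ε / 2) * (tilt (-b) x * L) := by
  rw [bump]; ring

/-- An affine function times a tilt integrates to its value at the mean. -/
lemma affine_tilt (t a c : ℝ) :
    Integrable (fun x => tilt t x * (a * x + c)) (gaussianReal 0 1) ∧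
      ∫ x, tilt t x * (a * x + c) ∂(gaussianReal 0 1) = a * t + c := by
  have e : (fun x => tilt t x * (a * x + c)) =
      fun x => a * (x * tilt t x) + c * tilt t x := by ext x; ring
  have i1 := (mul_tilt_integrable t).const_mul a
  have i2 := (tilt_integrable t).const_mul c
  rw [e]
  refine ⟨i1.add i2, ?_⟩
  rw [integral_add i1 i2, integral_const_mul, integral_const_mul, mul_tilt_integral,
    tilt_integral, mul_one]

/-- Lower bound for `F log F`: in each component of the mixture, `F` is at least the
corresponding weighted density. -/
lemma bump_log_lower {ε b : ℝ} (h0 : 0 < ε) (h1 : ε < 1) (x : ℝ) :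
    (1 - ε) * Real.log (1 - ε)
      + (ε / 2) * (tilt b x * (b * x + (Real.log (ε / 2) - b ^ 2 / 2)))
      + (ε / 2) * (tilt (-b) x * (-b * x + (Real.log (ε / 2) - b ^ 2 / 2)))
      ≤ bump ε b x * Real.log (bump ε b x) := by
  have hp := tilt_pos b x
  have hm := tilt_pos (-b) x
  have hpos := bump_pos (b := b) h0 h1 x
  have hε : 0 < 1 - ε := by linarith
  have l1 : Real.log (1 - ε) ≤ Real.log (bump ε b x) := by
    apply Real.log_le_log hε
    unfold bump
    have : 0 ≤ ε / 2 * (tilt b x + tilt (-b) x) := by positivity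
    linarith
  have key : ∀ t, t ^ 2 = b ^ 2 → ε / 2 * tilt t x ≤ bump ε b x →
      t * x + (Real.log (ε / 2) - b ^ 2 / 2) ≤ Real.log (bump ε b x) := by
    intro t ht h
    have := Real.log_le_log (by have := tilt_pos t x; positivity) h
    rw [Real.log_mul (by positivity) (tilt_pos t x).ne', tilt, Real.log_exp, ht] at this
    linarith
  have l2 := key b rfl (by unfold bump; nlinarith)
  have l3 := key (-b) (by ring) (by unfold bump; nlinarith)
  have e : bump ε b x * Real.log (bump ε b x) = (1 - ε) * Real.log (bump ε b x)
      + (ε / 2) * (tilt b x * Real.log (bump ε b x))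
      + (ε / 2) * (tilt (-b) x * Real.log (bump ε b x)) := by
    exact bump_mul ε b x _
  rw [e]
  gcongr

/-- Upper bound for `F log F` by convexity of `y log y`. -/
lemma bump_log_upper {ε b : ℝ} (h0 : 0 < ε) (h1 : ε < 1) (x : ℝ) :
    bump ε b x * Real.log (bump ε b x) ≤
      (ε / 2) * (tilt b x * (b * x + - (b ^ 2 / 2)))
      + (ε / 2) * (tilt (-b) x * (-b * x + - (b ^ 2 / 2))) := by
  have hp := tilt_pos b x
  have hm := tilt_pos (-b) x
  have hpos := bump_pos (b := b) h0 h1 x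
  -- tangent line of the convex function `y log y` at `F`: `g log g ≥ g log F + g - F`
  have key : ∀ g, 0 < g → g * Real.log (bump ε b x) + g - bump ε b x ≤ g * Real.log g := by
    intro g hg
    have h := Real.log_le_sub_one_of_pos (div_pos hpos hg)
    rw [Real.log_div hpos.ne' hg.ne'] at h
    have h' := mul_le_mul_of_nonneg_left h hg.le
    have : g * (bump ε b x / g - 1) = bump ε b x - g := by field_simp
    nlinarith
  have k0 := key 1 one_pos
  have k1 := key _ hp
  have k2 := key _ hm
  have e1 : Real.log (tilt b x) = b * x + - (b ^ 2 / 2) := by rw [tilt, Real.log_exp]; ring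
  have e2 : Real.log (tilt (-b) x) = -b * x + - (b ^ 2 / 2) := by rw [tilt, Real.log_exp]; ring
  rw [e1] at k1
  rw [e2] at k2
  rw [Real.log_one, mul_zero] at k0
  have hε : 0 ≤ 1 - ε := by linarith
  have k0' := mul_le_mul_of_nonneg_left k0 hε
  have k1' := mul_le_mul_of_nonneg_left k1 (by positivity : 0 ≤ ε / 2)
  have k2' := mul_le_mul_of_nonneg_left k2 (by positivity : 0 ≤ ε / 2)
  have e : bump ε b x = 1 - ε + ε / 2 * (tilt b x + tilt (-b) x) := rfl
  have e' : bump ε b x * Real.log (bump ε b x) = (1 - ε) * Real.log (bump ε b x)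
      + (ε / 2) * (tilt b x * Real.log (bump ε b x))
      + (ε / 2) * (tilt (-b) x * Real.log (bump ε b x)) := by
    exact bump_mul ε b x _
  rw [e']
  nlinarith

lemma sandwich_integrable {ν : Measure ℝ} {l g u : ℝ → ℝ} (hg : Continuous g)
    (hl : Integrable l ν) (hu : Integrable u ν) (h1 : ∀ x, l x ≤ g x) (h2 : ∀ x, g x ≤ u x) :
    Integrable g ν := by
  refine (hl.abs.add hu.abs).mono' hg.aestronglyMeasurable (ae_of_all _ fun x => ?_)
  rw [Real.norm_eq_abs, Pi.add_apply, abs_le]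
  have := neg_abs_le (l x)
  have := le_abs_self (u x)
  have := abs_nonneg (l x)
  have := abs_nonneg (u x)
  constructor <;> linarith [h1 x, h2 x]

/-- The entropy of the mixture falls short of the average entropy `ε b² / 2` of its components by
at most the Shannon entropy of the weights. -/
lemma bump_entropy {ε b : ℝ} (h0 : 0 < ε) (h1 : ε < 1) :
    (1 - ε) * Real.log (1 - ε) + ε * Real.log (ε / 2) + ε * b ^ 2 / 2
      ≤ ∫ x, bump ε b x * Real.log (bump ε b x) ∂(gaussianReal 0 1) ∧
    ∫ x, bump ε b x * Real.log (bump ε b x) ∂(gaussianReal 0 1) ≤ ε * b ^ 2 / 2 := by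
  obtain ⟨i1, v1⟩ := affine_tilt b b (Real.log (ε / 2) - b ^ 2 / 2)
  obtain ⟨i2, v2⟩ := affine_tilt (-b) (-b) (Real.log (ε / 2) - b ^ 2 / 2)
  obtain ⟨j1, w1⟩ := affine_tilt b b (- (b ^ 2 / 2))
  obtain ⟨j2, w2⟩ := affine_tilt (-b) (-b) (- (b ^ 2 / 2))
  have ic : Integrable (fun _ : ℝ => (1 - ε) * Real.log (1 - ε)) (gaussianReal 0 1) :=
    integrable_const _
  have il := (ic.add (i1.const_mul (ε / 2))).add (i2.const_mul (ε / 2))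
  have iu := (j1.const_mul (ε / 2)).add (j2.const_mul (ε / 2))
  have ig : Integrable (fun x => bump ε b x * Real.log (bump ε b x)) (gaussianReal 0 1) :=
    sandwich_integrable
      ((bump_continuous ε b).mul ((bump_continuous ε b).log fun x => (bump_pos h0 h1 x).ne'))
      il iu (bump_log_lower h0 h1) (bump_log_upper h0 h1)
  constructor
  · have h := integral_mono il ig (bump_log_lower h0 h1)
    refine le_trans (le_of_eq ?_) h
    rw [integral_add' (ic.add (i1.const_mul (ε / 2))) (i2.const_mul (ε / 2)),
      integral_add' ic (i1.const_mul (ε / 2)), integral_const, integral_const_mul,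
      integral_const_mul, v1, v2]
    simp
    ring
  · have h := integral_mono ig iu (bump_log_upper h0 h1)
    refine le_trans h (le_of_eq ?_)
    rw [integral_add' (j1.const_mul (ε / 2)) (j2.const_mul (ε / 2)),
      integral_const_mul, integral_const_mul, w1, w2]
    ring

/-- The Fisher information density of the profile. -/
def fisherDens (ε b x : ℝ) : ℝ :=
  (ε * b / 2 * (tilt b x - tilt (-b) x)) ^ 2 / bump ε b x

/-- Convexity of `(u, v) ↦ u² / v`, made explicit. -/
lemma fisherDens_upper {ε b : ℝ} (h0 : 0 < ε) (h1 : ε < 1) (x : ℝ) :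
    fisherDens ε b x ≤ b ^ 2 * (ε / 2) * (tilt b x + tilt (-b) x) := by
  have hp := tilt_pos b x
  have hm := tilt_pos (-b) x
  have hε : 0 ≤ 1 - ε := by linarith
  rw [fisherDens, div_le_iff₀ (bump_pos h0 h1 x), bump]
  generalize tilt b x = g at *
  generalize tilt (-b) x = h at *
  have e : b ^ 2 * (ε / 2) * (g + h) * (1 - ε + ε / 2 * (g + h))
      - (ε * b / 2 * (g - h)) ^ 2 = b ^ 2 * (ε / 2) * (g + h) * (1 - ε)
      + b ^ 2 * ε ^ 2 * (g * h) := by ring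
  have : 0 ≤ b ^ 2 * (ε / 2) * (g + h) * (1 - ε) + b ^ 2 * ε ^ 2 * (g * h) := by positivity
  linarith

lemma tilt_sqrt (t x : ℝ) :
    tilt t x = (Real.exp (-(t ^ 2 / 8)) * tilt (t / 2) x) ^ 2 := by
  rw [tilt, tilt, ← Real.exp_add, ← Real.exp_nat_mul]
  congr 1; push_cast; ring

lemma tilt_mul_tilt_neg (t x : ℝ) : tilt t x * tilt (-t) x = Real.exp (-t ^ 2) := by
  rw [tilt, tilt, ← Real.exp_add]; congr 1; ring

/-- The interaction of two components of the mixture costs at most the square root of the tilt,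
because `a c q² / (a + c q²) ≤ q` for `a, c ∈ [0, 1]`. -/
lemma fisherDens_lower {ε b : ℝ} (h0 : 0 < ε) (h1 : ε ≤ 1 / 2) (x : ℝ) :
    b ^ 2 * (ε / 2) * (tilt b x + tilt (-b) x)
      - b ^ 2 * (Real.exp (-(b ^ 2 / 8)) * (tilt (b / 2) x + tilt (-b / 2) x + 1))
      ≤ fisherDens ε b x := by
  have hq : tilt b x = (Real.exp (-(b ^ 2 / 8)) * tilt (b / 2) x) ^ 2 := tilt_sqrt b x
  have hr : tilt (-b) x = (Real.exp (-(b ^ 2 / 8)) * tilt (-b / 2) x) ^ 2 := by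
    have := tilt_sqrt (-b) x
    rwa [neg_sq] at this
  have hqp : 0 < Real.exp (-(b ^ 2 / 8)) * tilt (b / 2) x := mul_pos (Real.exp_pos _) (tilt_pos _ _)
  have hrp : 0 < Real.exp (-(b ^ 2 / 8)) * tilt (-b / 2) x :=
    mul_pos (Real.exp_pos _) (tilt_pos _ _)
  have hprod : tilt b x * tilt (-b) x ≤ Real.exp (-(b ^ 2 / 8)) := by
    rw [tilt_mul_tilt_neg]; apply Real.exp_le_exp.mpr; nlinarith [sq_nonneg b]
  have hE := Real.exp_pos (-(b ^ 2 / 8))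
  have hpos := bump_pos (b := b) h0 (by linarith) x
  have e : Real.exp (-(b ^ 2 / 8)) * (tilt (b / 2) x + tilt (-b / 2) x + 1) =
      Real.exp (-(b ^ 2 / 8)) * tilt (b / 2) x + Real.exp (-(b ^ 2 / 8)) * tilt (-b / 2) x
        + Real.exp (-(b ^ 2 / 8)) := by ring
  rw [fisherDens, le_div_iff₀ hpos, e, bump]
  rw [bump] at hpos
  generalize tilt b x = g at *
  generalize tilt (-b) x = h at *
  generalize Real.exp (-(b ^ 2 / 8)) * tilt (b / 2) x = q at *
  generalize Real.exp (-(b ^ 2 / 8)) * tilt (-b / 2) x = r at *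
  generalize Real.exp (-(b ^ 2 / 8)) = E at *
  -- pairwise bounds for the three interactions
  have k1 : (ε / 2) * (1 - ε) * g ≤ q * (1 - ε + ε / 2 * (g + h)) := by
    have hh : 0 ≤ h := by rw [hr]; positivity
    have : (ε / 2) * (1 - ε) * q ≤ 1 - ε + ε / 2 * g := by
      rw [hq]
      have a1 : 0 ≤ (1 - ε) * (1 - ε / 2) := by nlinarith
      have a2 : 0 ≤ (ε / 2) * (1 - ε) * (q - 1) ^ 2 := by
        have : 0 ≤ 1 - ε := by linarith
        positivity
      have a3 : 0 ≤ (ε / 2) * ε * q ^ 2 := by positivity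
      have a4 : 0 ≤ (ε / 2) * (1 - ε) * q := by
        have : 0 ≤ 1 - ε := by linarith
        positivity
      nlinarith
    have a5 : 0 ≤ q * (ε / 2 * h) := by positivity
    have := mul_le_mul_of_nonneg_left this hqp.le
    rw [hq] at this ⊢
    nlinarith
  have k2 : (ε / 2) * (1 - ε) * h ≤ r * (1 - ε + ε / 2 * (g + h)) := by
    have hh : 0 ≤ g := by rw [hq]; positivity
    have : (ε / 2) * (1 - ε) * r ≤ 1 - ε + ε / 2 * h := by
      rw [hr]
      have a1 : 0 ≤ (1 - ε) * (1 - ε / 2) := by nlinarith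
      have a2 : 0 ≤ (ε / 2) * (1 - ε) * (r - 1) ^ 2 := by
        have : 0 ≤ 1 - ε := by linarith
        positivity
      have a3 : 0 ≤ (ε / 2) * ε * r ^ 2 := by positivity
      have a4 : 0 ≤ (ε / 2) * (1 - ε) * r := by
        have : 0 ≤ 1 - ε := by linarith
        positivity
      nlinarith
    have a5 : 0 ≤ r * (ε / 2 * g) := by positivity
    have := mul_le_mul_of_nonneg_left this hrp.le
    rw [hr] at this ⊢
    nlinarith
  have k3 : ε ^ 2 * (g * h) ≤ E * (1 - ε + ε / 2 * (g + h)) := by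
    have hg : 0 ≤ g := by rw [hq]; positivity
    have hh : 0 ≤ h := by rw [hr]; positivity
    have a1 : ε ^ 2 * (g * h) ≤ ε ^ 2 * E := by gcongr
    have a2 : ε ^ 2 * E ≤ (1 - ε) * E := by gcongr; nlinarith
    have a3 : 0 ≤ E * (ε / 2 * (g + h)) := by positivity
    nlinarith
  have := mul_le_mul_of_nonneg_left (add_le_add (add_le_add k1 k2) k3) (sq_nonneg b)
  nlinarith

/-- The Fisher information of the mixture agrees with the average `ε b²` of those of its
components up to an exponentially small error. -/
lemma bump_fisher {ε b : ℝ} (h0 : 0 < ε) (h1 : ε ≤ 1 / 2) :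
    ε * b ^ 2 - 3 * (b ^ 2 * Real.exp (-(b ^ 2 / 8)))
      ≤ ∫ x, fisherDens ε b x ∂(gaussianReal 0 1) ∧
    ∫ x, fisherDens ε b x ∂(gaussianReal 0 1) ≤ ε * b ^ 2 := by
  have h1' : ε < 1 := by linarith
  have i1 := tilt_integrable b
  have i2 := tilt_integrable (-b)
  have j1 := tilt_integrable (b / 2)
  have j2 := tilt_integrable (-b / 2)
  have iu : Integrable (fun x => b ^ 2 * (ε / 2) * (tilt b x + tilt (-b) x)) (gaussianReal 0 1) :=
    (i1.add i2).const_mul _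
  have ie : Integrable (fun x => b ^ 2 * (Real.exp (-(b ^ 2 / 8)) *
      (tilt (b / 2) x + tilt (-b / 2) x + 1))) (gaussianReal 0 1) :=
    (((j1.add j2).add (integrable_const 1)).const_mul _).const_mul _
  have vu : ∫ x, b ^ 2 * (ε / 2) * (tilt b x + tilt (-b) x) ∂(gaussianReal 0 1) = ε * b ^ 2 := by
    rw [integral_const_mul, integral_add i1 i2, tilt_integral, tilt_integral]; ring
  have ve : ∫ x, b ^ 2 * (Real.exp (-(b ^ 2 / 8)) *
      (tilt (b / 2) x + tilt (-b / 2) x + 1)) ∂(gaussianReal 0 1) =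
      3 * (b ^ 2 * Real.exp (-(b ^ 2 / 8))) := by
    rw [integral_const_mul, integral_const_mul,
      integral_add (f := fun x => tilt (b / 2) x + tilt (-b / 2) x) (j1.add j2)
        (integrable_const 1), integral_add j1 j2, tilt_integral, tilt_integral]
    simp
    ring
  have hc : Continuous (fisherDens ε b) := by
    have := tilt_continuous b
    have := tilt_continuous (-b)
    unfold fisherDens
    exact Continuous.div (by fun_prop) (bump_continuous ε b) fun x => (bump_pos h0 h1' x).ne'
  have ig := sandwich_integrable hc (iu.sub ie) iu (fisherDens_lower h0 h1)
    (fisherDens_upper h0 h1')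
  constructor
  · have h := integral_mono (iu.sub ie) ig (fisherDens_lower h0 h1)
    rwa [integral_sub' iu ie, vu, ve] at h
  · have h := integral_mono ig iu (fisherDens_upper h0 h1')
    rwa [vu] at h

/-! ### The mixture in `ℝⁿ` -/

/-- The density of the three-bump mixture in direction `e`, relative to the Gaussian. -/
def mixDens {n : ℕ} (e : En n) (ε b : ℝ) (x : En n) : ℝ := bump ε b ⟪e, x⟫

lemma tilt_hasDerivAt (t x : ℝ) : HasDerivAt (tilt t) (t * tilt t x) x := by
  have h : HasDerivAt (fun x => t * x - t ^ 2 / 2) t x := by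
    simpa using ((hasDerivAt_id x).const_mul t).sub_const (t ^ 2 / 2)
  have := h.exp
  rw [mul_comm] at this
  exact this

lemma bump_hasDerivAt (ε b x : ℝ) :
    HasDerivAt (bump ε b) (ε * b / 2 * (tilt b x - tilt (-b) x)) x := by
  have h := (((tilt_hasDerivAt b x).add (tilt_hasDerivAt (-b) x)).const_mul (ε / 2)).const_add
    (1 - ε)
  refine h.congr_deriv ?_
  ring

lemma mixDens_gradient {n : ℕ} (e : En n) (ε b : ℝ) (x : En n) :
    gradient (mixDens e ε b) x =
      (ε * b / 2 * (tilt b ⟪e, x⟫ - tilt (-b) ⟪e, x⟫)) • e := by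
  refine HasGradientAt.gradient ?_
  rw [hasGradientAt_iff_hasFDerivAt]
  have h := (bump_hasDerivAt ε b ⟪e, x⟫).comp_hasFDerivAt x (innerSL ℝ e).hasFDerivAt
  refine h.congr_fderiv ?_
  ext y
  simp

lemma mixDens_fisher {n : ℕ} {e : En n} (he : ‖e‖ = 1) {ε b : ℝ} (h0 : 0 < ε) (h1 : ε < 1) :
    fisherInfo (mixDens e ε b) = ∫ x, fisherDens ε b x ∂(gaussianReal 0 1) := by
  have hc : Continuous (fisherDens ε b) := by
    have := tilt_continuous b
    have := tilt_continuous (-b)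
    unfold fisherDens
    exact Continuous.div (by fun_prop) (bump_continuous ε b) fun x => (bump_pos h0 h1 x).ne'
  rw [fisherInfo, ← stdGauss_map_inner he, integral_map (by fun_prop) hc.aestronglyMeasurable]
  refine integral_congr_ae (ae_of_all _ fun x => ?_)
  simp only [mixDens_gradient, fisherDens, mixDens]
  rw [norm_smul, he, mul_one, Real.norm_eq_abs, sq_abs]

lemma mixDens_relEnt {n : ℕ} {e : En n} (he : ‖e‖ = 1) {ε b : ℝ} (h0 : 0 < ε) (h1 : ε < 1) :
    relEnt (mixDens e ε b) =
      ∫ x, bump ε b x * Real.log (bump ε b x) ∂(gaussianReal 0 1) := by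
  have hc : Continuous (fun x => bump ε b x * Real.log (bump ε b x)) :=
    (bump_continuous ε b).mul ((bump_continuous ε b).log fun x => (bump_pos h0 h1 x).ne')
  rw [relEnt, ← stdGauss_map_inner he, integral_map (by fun_prop) hc.aestronglyMeasurable]
  rfl

/-- The deficit of the mixture is controlled from above by the Shannon entropy of the weights and
from below by an exponentially small quantity; the two bounds are combined into one. -/
lemma mixDens_deficit {n : ℕ} {e : En n} (he : ‖e‖ = 1) {ε b : ℝ} (h0 : 0 < ε) (h1 : ε ≤ 1 / 2) :
    |lsiDeficit (mixDens e ε b)| ≤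
      ε + ε * Real.log (2 / ε) + 2 * (b ^ 2 * Real.exp (-(b ^ 2 / 8))) := by
  obtain ⟨f1, f2⟩ := bump_fisher (b := b) h0 h1
  obtain ⟨g1, g2⟩ := bump_entropy (b := b) h0 (by linarith)
  rw [lsiDeficit, mixDens_fisher he h0 (by linarith), mixDens_relEnt he h0 (by linarith)]
  have hl : -ε ≤ (1 - ε) * Real.log (1 - ε) := by
    have hp : 0 < 1 - ε := by linarith
    have h := Real.one_sub_inv_le_log_of_pos hp
    have := mul_le_mul_of_nonneg_left h hp.le
    have e1 : (1 - ε) * (1 - (1 - ε)⁻¹) = -ε := by field_simp; ring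
    linarith
  have hlog : Real.log (ε / 2) = - Real.log (2 / ε) := by
    rw [← Real.log_inv]; congr 1; rw [inv_div]
  have hlog0 : 0 ≤ Real.log (2 / ε) := by
    apply Real.log_nonneg
    rw [le_div_iff₀ h0]; linarith
  have hε : 0 ≤ ε * Real.log (2 / ε) := by positivity
  have hE : 0 ≤ b ^ 2 * Real.exp (-(b ^ 2 / 8)) := by positivity
  rw [hlog] at g1
  rw [abs_le]
  constructor <;> linarith

lemma mixDens_nonneg {n : ℕ} (e : En n) {ε b : ℝ} (h0 : 0 < ε) (h1 : ε < 1) (x : En n) :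
    0 ≤ mixDens e ε b x := (bump_pos h0 h1 _).le

/-- The mixture `(1 - ε) γ + (ε/2) γ(· - be) + (ε/2) γ(· + be)` as a sum of
translates of the Gaussian. -/
lemma mixDens_measure {n : ℕ} {e : En n} (he : ‖e‖ = 1) {ε b : ℝ} (h0 : 0 < ε) (h1 : ε < 1) :
    densMeasure (mixDens e ε b) = ENNReal.ofReal (1 - ε) • stdGauss n +
      (ENNReal.ofReal (ε / 2) • (stdGauss n).map (fun x => x + b • e) +
       ENNReal.ofReal (ε / 2) • (stdGauss n).map (fun x => x + (-b) • e)) := by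
  have key : ∀ t : ℝ, (stdGauss n).map (fun x => x + t • e) =
      (stdGauss n).withDensity (fun x => ENNReal.ofReal (tilt t ⟪e, x⟫)) := by
    intro t
    rw [stdGauss_map_add]
    congr 1
    ext x
    rw [tilt, norm_smul, he, mul_one, Real.norm_eq_abs, sq_abs, inner_smul_left]
    simp
  have hm : ∀ t : ℝ, Measurable (fun x : En n => ENNReal.ofReal (tilt t ⟪e, x⟫)) := by
    intro t
    have := (tilt_continuous t).measurable
    fun_prop
  rw [key, key, ← withDensity_smul _ (hm b), ← withDensity_smul _ (hm (-b)),
    ← withDensity_add_left ((hm b).const_smul _),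
    ← withDensity_const, ← withDensity_add_left measurable_const, densMeasure]
  congr 1
  ext x
  have hp := tilt_pos b ⟪e, x⟫
  have hn := tilt_pos (-b) ⟪e, x⟫
  simp only [Pi.add_apply, Pi.smul_apply, smul_eq_mul, mixDens, bump]
  rw [← ENNReal.ofReal_mul (by positivity), ← ENNReal.ofReal_mul (by positivity),
    ← ENNReal.ofReal_add (by positivity) (by positivity),
    ← ENNReal.ofReal_add (by linarith) (by positivity)]
  congr 1
  ring

lemma ofReal_weights {ε : ℝ} (h0 : 0 < ε) (h1 : ε < 1) :
    ENNReal.ofReal (1 - ε) + (ENNReal.ofReal (ε / 2) + ENNReal.ofReal (ε / 2)) = 1 := by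
  rw [← ENNReal.ofReal_add (by positivity) (by positivity),
    ← ENNReal.ofReal_add (by linarith) (by positivity)]
  simp

lemma mixDens_prob {n : ℕ} {e : En n} (he : ‖e‖ = 1) {ε b : ℝ} (h0 : 0 < ε) (h1 : ε < 1) :
    IsProbabilityMeasure (densMeasure (mixDens e ε b)) := by
  have i1 : ∀ t : ℝ, IsProbabilityMeasure ((stdGauss n).map (fun x => x + t • e)) :=
    fun t => Measure.isProbabilityMeasure_map (by fun_prop)
  constructor
  rw [mixDens_measure he h0 h1]
  simp only [Measure.add_apply, Measure.smul_apply, measure_univ, smul_eq_mul, mul_one]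
  exact ofReal_weights h0 h1

/-- Integration against the mixture, reduced to the Gaussian. -/
lemma mixDens_integral {n : ℕ} {e : En n} (he : ‖e‖ = 1) {ε b : ℝ} (h0 : 0 < ε) (h1 : ε < 1)
    {G : Type*} [NormedAddCommGroup G] [NormedSpace ℝ G] [CompleteSpace G] (g : En n → G)
    (hg : Continuous g)
    (hi : ∀ t : ℝ, Integrable (fun x => g (x + t • e)) (stdGauss n)) :
    ∫ x, g x ∂(densMeasure (mixDens e ε b)) = (1 - ε) • ∫ x, g x ∂(stdGauss n) +
      ((ε / 2) • ∫ x, g (x + b • e) ∂(stdGauss n) +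
       (ε / 2) • ∫ x, g (x + (-b) • e) ∂(stdGauss n)) := by
  have hsm : ∀ ν : Measure (En n), AEStronglyMeasurable g ν := fun ν => hg.aestronglyMeasurable
  have him : ∀ t : ℝ, Integrable g ((stdGauss n).map (fun x => x + t • e)) := fun t =>
    (integrable_map_measure (hsm _) (by fun_prop)).mpr (hi t)
  have hi0 : Integrable g (stdGauss n) := by simpa using hi 0
  rw [mixDens_measure he h0 h1, integral_add_measure (hi0.smul_measure ENNReal.ofReal_ne_top)
    (((him b).smul_measure ENNReal.ofReal_ne_top).add_measure
      ((him (-b)).smul_measure ENNReal.ofReal_ne_top)),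
    integral_add_measure ((him b).smul_measure ENNReal.ofReal_ne_top)
      ((him (-b)).smul_measure ENNReal.ofReal_ne_top),
    integral_smul_measure, integral_smul_measure, integral_smul_measure,
    integral_map (by fun_prop) (hsm _), integral_map (by fun_prop) (hsm _),
    ENNReal.toReal_ofReal (by linarith), ENNReal.toReal_ofReal (by linarith)]

lemma mixDens_centered {n : ℕ} {e : En n} (he : ‖e‖ = 1) {ε b : ℝ} (h0 : 0 < ε) (h1 : ε < 1) :
    IsCentered (densMeasure (mixDens e ε b)) := by
  have hid : Integrable (fun x : En n => x) (stdGauss n) := IsGaussian.integrable_id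
  have hz : ∫ x, x ∂(stdGauss n) = 0 := by rw [stdGauss_eq]; exact integral_id_stdGaussian
  have hs : ∀ t : ℝ, ∫ x, (x + t • e) ∂(stdGauss n) = t • e := by
    intro t
    rw [integral_add hid (integrable_const _), hz]
    simp
  rw [IsCentered, mixDens_integral he h0 h1 (fun x => x) continuous_id
    (fun t => hid.add (integrable_const _)), hs, hs, hz]
  simp

lemma mixDens_moment {n : ℕ} {e : En n} (he : ‖e‖ = 1) {ε b : ℝ} (h0 : 0 < ε) (h1 : ε < 1) :
    _root_.moment 2 (densMeasure (mixDens e ε b)) = n + ε * b ^ 2 := by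
  have hx : ∀ (t : ℝ) (x : En n), ‖x + t • e‖ ^ 2 = ‖x‖ ^ 2 + (2 * t * ⟪e, x⟫ + t ^ 2) := by
    intro t x
    rw [norm_add_sq_real, inner_smul_right, norm_smul, he, Real.norm_eq_abs, mul_one, sq_abs,
      real_inner_comm]
    ring
  have i1 := stdGauss_integrable_sq n
  have i2 : ∀ t : ℝ, Integrable (fun x => 2 * t * ⟪e, x⟫ + t ^ 2) (stdGauss n) := fun t =>
    ((stdGauss_inner_integrable e).const_mul _).add (integrable_const _)
  have hs : ∀ t : ℝ, ∫ x, ‖x + t • e‖ ^ 2 ∂(stdGauss n) = n + t ^ 2 := by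
    intro t
    simp_rw [hx]
    rw [integral_add i1 (i2 t), stdGauss_integral_sq,
      integral_add ((stdGauss_inner_integrable e).const_mul _) (integrable_const _),
      integral_const_mul, stdGauss_integral_inner]
    simp
  have hm : _root_.moment 2 (densMeasure (mixDens e ε b)) =
      ∫ x, ‖x‖ ^ 2 ∂(densMeasure (mixDens e ε b)) := by
    rw [_root_.moment]; norm_cast
  rw [hm, mixDens_integral he h0 h1 (fun x => ‖x‖ ^ 2) (by fun_prop)
    (fun t => by simp_rw [hx]; exact i1.add (i2 t)), hs, hs, stdGauss_integral_sq]
  simp only [smul_eq_mul]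
  ring

/-! ### Wasserstein bounds -/

/-- Upper bound: the coupling that leaves mass `1 - ε` in place and moves mass `ε` by `b`. -/
lemma mixDens_cost_upper {n : ℕ} {e : En n} (he : ‖e‖ = 1) {ε b : ℝ} (h0 : 0 < ε) (h1 : ε < 1)
    (hb : 0 < b) {p : ℝ} (hp : 1 ≤ p) :
    (⨅ (π' : Measure (En n × En n)) (_ : IsCoupling π' (densMeasure (mixDens e ε b)) (stdGauss n)),
      ∫⁻ z, ENNReal.ofReal (‖z.1 - z.2‖ ^ p) ∂π') ≤ ENNReal.ofReal (ε * b ^ p) := by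
  let T : ℝ → En n → En n × En n := fun t x => (x + t • e, x)
  have hT : ∀ t, Measurable (T t) := fun t => by fun_prop
  let Q : Measure (En n × En n) := ENNReal.ofReal (1 - ε) • (stdGauss n).map (T 0) +
      (ENNReal.ofReal (ε / 2) • (stdGauss n).map (T b) +
       ENNReal.ofReal (ε / 2) • (stdGauss n).map (T (-b)))
  have hfst : ∀ t, ((stdGauss n).map (T t)).map Prod.fst = (stdGauss n).map (fun x => x + t • e) :=
    fun t => Measure.map_map measurable_fst (hT t)
  have hsnd : ∀ t, ((stdGauss n).map (T t)).map Prod.snd = stdGauss n :=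
    fun t => (Measure.map_map measurable_snd (hT t)).trans Measure.map_id
  have hQ1 : Q.map Prod.fst = densMeasure (mixDens e ε b) := by
    simp only [Q]
    rw [Measure.map_add _ _ measurable_fst, Measure.map_add _ _ measurable_fst,
      Measure.map_smul, Measure.map_smul, Measure.map_smul, hfst, hfst, hfst,
      mixDens_measure he h0 h1]
    simp
  have hQ2 : Q.map Prod.snd = stdGauss n := by
    simp only [Q]
    rw [Measure.map_add _ _ measurable_snd, Measure.map_add _ _ measurable_snd,
      Measure.map_smul, Measure.map_smul, Measure.map_smul, hsnd, hsnd, hsnd,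
      ← add_smul, ← add_smul, ofReal_weights h0 h1, one_smul]
  have hQp : IsProbabilityMeasure Q := by
    constructor
    have := measure_univ (μ := stdGauss n)
    rw [← hQ2, Measure.map_apply measurable_snd MeasurableSet.univ] at this
    simpa using this
  refine (iInf₂_le Q ⟨hQp, hQ1, hQ2⟩).trans (le_of_eq ?_)
  have hm : Measurable (fun z : En n × En n => ENNReal.ofReal (‖z.1 - z.2‖ ^ p)) := by fun_prop
  have hcost : ∀ t, ∫⁻ z, ENNReal.ofReal (‖z.1 - z.2‖ ^ p) ∂((stdGauss n).map (T t)) =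
      ENNReal.ofReal (|t| ^ p) := by
    intro t
    rw [lintegral_map hm (hT t)]
    simp [T, norm_smul, he]
  simp only [Q]
  rw [lintegral_add_measure, lintegral_add_measure, lintegral_smul_measure,
    lintegral_smul_measure, lintegral_smul_measure, hcost, hcost, hcost, abs_neg, abs_zero,
    abs_of_pos hb, Real.zero_rpow (by linarith), ENNReal.ofReal_zero, smul_zero, zero_add,
    ← add_smul, ← ENNReal.ofReal_add (by positivity) (by positivity), smul_eq_mul,
    ← ENNReal.ofReal_mul (by positivity)]
  congr 1
  ring

/-- Chernoff bound for a one-dimensional marginal. -/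
lemma stdGauss_tail {n : ℕ} {e : En n} (he : ‖e‖ = 1) {s : ℝ} (hs : 0 ≤ s) :
    (stdGauss n).real {x | s ≤ ⟪e, x⟫} ≤ Real.exp (-(s ^ 2 / 2)) := by
  have hm := stdGauss_map_inner he
  have hint : Integrable (fun x => Real.exp (s * ⟪e, x⟫)) (stdGauss n) := by
    have h := integrable_exp_mul_gaussianReal (μ := 0) (v := 1) s
    rw [← hm] at h
    exact (integrable_map_measure (f := fun x : En n => ⟪e, x⟫) (g := fun y => Real.exp (s * y))
      (by fun_prop) (by fun_prop)).mp h
  have h := measure_ge_le_exp_mul_mgf (X := fun x => ⟪e, x⟫) (μ := stdGauss n) s hs hint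
  rw [mgf_gaussianReal hm, ← Real.exp_add] at h
  refine h.trans (le_of_eq ?_)
  congr 1
  push_cast
  ring

/-- Lower bound on every transport plan: the mixture puts mass of order `ε` beyond `b/2` in the
direction `e`, where the Gaussian has almost none even beyond `b/4`. -/
lemma mixDens_cost_lower {n : ℕ} {e : En n} (he : ‖e‖ = 1) {ε b : ℝ} (h0 : 0 < ε) (h1 : ε < 1)
    (hb : 0 < b) (hb1 : Real.exp (-(b ^ 2 / 8)) ≤ 1 / 2) (hb2 : Real.exp (-(b ^ 2 / 32)) ≤ ε / 8)
    {p : ℝ} (hp : 1 ≤ p) :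
    ENNReal.ofReal ((b / 4) ^ p * (ε / 8)) ≤
    (⨅ (π' : Measure (En n × En n)) (_ : IsCoupling π' (densMeasure (mixDens e ε b)) (stdGauss n)),
      ∫⁻ z, ENNReal.ofReal (‖z.1 - z.2‖ ^ p) ∂π') := by
  refine le_iInf₂ fun Q hQ => ?_
  obtain ⟨hQp, hQ1, hQ2⟩ := hQ
  have hmeas : ∀ s : ℝ, MeasurableSet {x : En n | s ≤ ⟪e, x⟫} := fun s =>
    measurableSet_le measurable_const (by fun_prop)
  -- the Gaussian tail
  have t1 : (stdGauss n) {x | b / 4 ≤ ⟪e, x⟫} ≤ ENNReal.ofReal (ε / 8) := by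
    rw [← ENNReal.ofReal_toReal (measure_ne_top (stdGauss n) _)]
    refine ENNReal.ofReal_le_ofReal ((stdGauss_tail he (by positivity)).trans (le_trans ?_ hb2))
    apply Real.exp_le_exp.mpr
    nlinarith
  -- the mass of the translated bump
  have t2 : ENNReal.ofReal (ε / 4) ≤ densMeasure (mixDens e ε b) {x | b / 2 ≤ ⟪e, x⟫} := by
    have t3 : 1 / 2 ≤ (stdGauss n).real {x | -(b / 2) ≤ ⟪e, x⟫} := by
      have h := stdGauss_tail (e := -e) (by rwa [norm_neg]) (s := b / 2) (by positivity)
      have hc := probReal_add_probReal_compl (μ := stdGauss n) (hmeas (-(b / 2)))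
      have hsub : (stdGauss n).real {x | -(b / 2) ≤ ⟪e, x⟫}ᶜ ≤
          (stdGauss n).real {x | b / 2 ≤ ⟪-e, x⟫} := by
        refine measureReal_mono ?_ (measure_ne_top _ _)
        intro x hx
        simp only [Set.mem_compl_iff, Set.mem_ofPred_eq, not_le, inner_neg_left] at hx ⊢
        linarith
      have he : Real.exp (-((b / 2) ^ 2 / 2)) ≤ 1 / 2 := by
        convert hb1 using 3; ring
      linarith
    have t4 : ENNReal.ofReal (1 / 2) ≤ (stdGauss n) {x | -(b / 2) ≤ ⟪e, x⟫} := by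
      rw [← ENNReal.ofReal_toReal (measure_ne_top (stdGauss n) _)]
      exact ENNReal.ofReal_le_ofReal t3
    have hpre : (fun x => x + b • e) ⁻¹' {x : En n | b / 2 ≤ ⟪e, x⟫} =
        {x | -(b / 2) ≤ ⟪e, x⟫} := by
      ext x
      simp only [Set.mem_preimage, Set.mem_ofPred_eq, inner_add_right, inner_smul_right,
        real_inner_self_eq_norm_sq, he]
      constructor <;> intro h <;> linarith
    rw [mixDens_measure he h0 h1]
    simp only [Measure.add_apply, Measure.smul_apply, smul_eq_mul]
    rw [Measure.map_apply (by fun_prop) (hmeas _), hpre]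
    refine le_trans ?_ (le_trans le_self_add le_add_self)
    refine le_trans ?_ (mul_le_mul_right t4 _)
    rw [← ENNReal.ofReal_mul (by positivity)]
    exact ENNReal.ofReal_le_ofReal (by linarith)
  let A : Set (En n × En n) := Prod.fst ⁻¹' {x | b / 2 ≤ ⟪e, x⟫}
  let B : Set (En n × En n) := Prod.snd ⁻¹' {x | b / 4 ≤ ⟪e, x⟫}
  have hA : MeasurableSet A := (hmeas _).preimage measurable_fst
  have hB : MeasurableSet B := (hmeas _).preimage measurable_snd
  have hQA : ENNReal.ofReal (ε / 4) ≤ Q A := by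
    rw [← hQ1, Measure.map_apply measurable_fst (hmeas _)] at t2
    exact t2
  have hQB : Q B ≤ ENNReal.ofReal (ε / 8) := by
    rw [← hQ2, Measure.map_apply measurable_snd (hmeas _)] at t1
    exact t1
  have hQAB : ENNReal.ofReal (ε / 8) ≤ Q (A \ B) := by
    refine le_trans ?_ (le_measure_sdiff)
    refine le_trans ?_ (tsub_le_tsub hQA hQB)
    rw [← ENNReal.ofReal_sub _ (by positivity)]
    exact ENNReal.ofReal_le_ofReal (by linarith)
  have hpt : ∀ z ∈ A \ B, ENNReal.ofReal ((b / 4) ^ p) ≤ ENNReal.ofReal (‖z.1 - z.2‖ ^ p) := by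
    rintro z ⟨hz1, hz2⟩
    simp only [A, B, Set.mem_preimage, Set.mem_ofPred_eq, not_le] at hz1 hz2
    have h := real_inner_le_norm e (z.1 - z.2)
    rw [he, one_mul, inner_sub_right] at h
    refine ENNReal.ofReal_le_ofReal (Real.rpow_le_rpow (by positivity) ?_ (by linarith))
    linarith
  calc ENNReal.ofReal ((b / 4) ^ p * (ε / 8))
      = ENNReal.ofReal ((b / 4) ^ p) * ENNReal.ofReal (ε / 8) :=
        ENNReal.ofReal_mul (by positivity)
    _ ≤ ENNReal.ofReal ((b / 4) ^ p) * Q (A \ B) := by gcongr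
    _ = ∫⁻ _ in A \ B, ENNReal.ofReal ((b / 4) ^ p) ∂Q := (setLIntegral_const _ _).symm
    _ ≤ ∫⁻ z in A \ B, ENNReal.ofReal (‖z.1 - z.2‖ ^ p) ∂Q :=
        setLIntegral_mono' (hA.diff hB) hpt
    _ ≤ ∫⁻ z, ENNReal.ofReal (‖z.1 - z.2‖ ^ p) ∂Q := setLIntegral_le_lintegral _ _

lemma mixDens_wasserstein {n : ℕ} {e : En n} (he : ‖e‖ = 1) {ε b : ℝ} (h0 : 0 < ε) (h1 : ε < 1)
    (hb : 0 < b) (hb1 : Real.exp (-(b ^ 2 / 8)) ≤ 1 / 2) (hb2 : Real.exp (-(b ^ 2 / 32)) ≤ ε / 8)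
    {p : ℝ} (hp : 1 ≤ p) :
    ((b / 4) ^ p * (ε / 8)) ^ (1 / p) ≤
        wasserstein p (densMeasure (mixDens e ε b)) (stdGauss n) ∧
      wasserstein p (densMeasure (mixDens e ε b)) (stdGauss n) ≤ (ε * b ^ p) ^ (1 / p) := by
  have hl := mixDens_cost_lower he h0 h1 hb hb1 hb2 hp
  have hu := mixDens_cost_upper he h0 h1 hb hp
  have hp0 : 0 ≤ 1 / p := by positivity
  have hl' := ENNReal.rpow_le_rpow hl hp0
  have hu' := ENNReal.rpow_le_rpow hu hp0
  rw [ENNReal.ofReal_rpow_of_nonneg (by positivity) hp0] at hl' hu'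
  have htop := ne_top_of_le_ne_top ENNReal.ofReal_ne_top hu'
  rw [wasserstein]
  constructor
  · exact (ENNReal.ofReal_le_iff_le_toReal htop).mp hl'
  · exact ENNReal.toReal_le_of_le_ofReal (by positivity) hu'

/-! ### Asymptotics as the bumps escape to infinity -/

lemma tendsto_sq_div_atTop {r : ℝ} (hr : 0 < r) :
    Tendsto (fun b : ℝ => b ^ 2 / r) atTop atTop :=
  (tendsto_pow_atTop two_ne_zero).atTop_div_const hr

/-- The deficit bound, with `ε = c / b²`, decays faster than `b ^ (-θ)` for every `θ < 2`. -/
lemma deficit_bound_tendsto {c θ : ℝ} (hc : 0 < c) (hc1 : c ≤ 1) (hθ : θ < 2) :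
    Tendsto (fun b : ℝ => (c / b ^ 2 + c / b ^ 2 * Real.log (2 / (c / b ^ 2))
      + 2 * (b ^ 2 * Real.exp (-(b ^ 2 / 8)))) * b ^ θ) atTop (𝓝 0) := by
  have hr : 0 < 2 - θ := by linarith
  have t1 := tendsto_rpow_neg_atTop hr
  have t2 := (isLittleO_log_rpow_atTop hr).tendsto_div_nhds_zero
  have t3 := (Real.tendsto_pow_mul_exp_neg_atTop_nhds_zero 2).comp
    (tendsto_sq_div_atTop (r := 8) (by norm_num))
  have t : Tendsto (fun b : ℝ => c * b ^ (-(2 - θ))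
      + c * (Real.log (2 / c) * b ^ (-(2 - θ)) + 2 * (Real.log b / b ^ (2 - θ)))
      + 128 * ((b ^ 2 / 8) ^ 2 * Real.exp (-(b ^ 2 / 8)))) atTop (𝓝 0) := by
    have := ((t1.const_mul c).add (((t1.const_mul (Real.log (2 / c))).add
      (t2.const_mul 2)).const_mul c)).add (t3.const_mul 128)
    simpa using this
  refine squeeze_zero' ?_ ?_ t
  · filter_upwards [eventually_ge_atTop 1] with b hb
    have hb0 : 0 < b := by linarith
    have : 0 ≤ Real.log (2 / (c / b ^ 2)) := by
      apply Real.log_nonneg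
      rw [le_div_iff₀ (by positivity), one_mul, div_le_iff₀ (by positivity)]
      nlinarith
    positivity
  · filter_upwards [eventually_ge_atTop 1] with b hb
    have hb0 : 0 < b := by linarith
    have e1 : b ^ θ / b ^ 2 = b ^ (-(2 - θ)) := by
      rw [neg_sub, Real.rpow_sub hb0]; norm_cast
    have e2 : Real.log (2 / (c / b ^ 2)) = Real.log (2 / c) + 2 * Real.log b := by
      have : 2 / (c / b ^ 2) = 2 / c * b ^ 2 := by field_simp
      rw [this, Real.log_mul (by positivity) (by positivity), Real.log_pow]; norm_num
    have e3 : Real.log b / b ^ (2 - θ) = Real.log b * b ^ (-(2 - θ)) := by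
      rw [Real.rpow_neg hb0.le]; rfl
    have e4 : b ^ θ ≤ b ^ 2 := by
      have := Real.rpow_le_rpow_of_exponent_le hb hθ.le
      norm_cast at this
    rw [e2, e3, ← e1]
    have e5 : 2 * (b ^ 2 * Real.exp (-(b ^ 2 / 8))) * b ^ θ ≤
        128 * ((b ^ 2 / 8) ^ 2 * Real.exp (-(b ^ 2 / 8))) := by
      have := mul_le_mul_of_nonneg_left e4
        (by positivity : 0 ≤ 2 * (b ^ 2 * Real.exp (-(b ^ 2 / 8))))
      refine this.trans (le_of_eq ?_)
      ring
    rw [add_mul]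
    refine add_le_add (le_of_eq ?_) e5
    field_simp

/-- Along `ε = c / b²`, `b → ∞`, every property required of the sequence holds. -/
lemma mixDens_family {n : ℕ} {e : En n} (he : ‖e‖ = 1) {p : ℝ} (hp1 : 1 ≤ p) (hp2 : p < 2)
    {α : ℝ} (hα0 : 0 < α) (hα : α < 2 * p / (2 - p)) {c : ℝ} (hc : 0 < c) (hc1 : c ≤ 1) :
    (∀ᶠ b : ℝ in atTop, 0 < b ∧ c / b ^ 2 < 1 ∧
      0 < wasserstein p (densMeasure (mixDens e (c / b ^ 2) b)) (stdGauss n)) ∧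
    Tendsto (fun b : ℝ => lsiDeficit (mixDens e (c / b ^ 2) b)) atTop (𝓝 0) ∧
    Tendsto (fun b : ℝ => wasserstein p (densMeasure (mixDens e (c / b ^ 2) b)) (stdGauss n))
      atTop (𝓝 0) ∧
    Tendsto (fun b : ℝ => lsiDeficit (mixDens e (c / b ^ 2) b) /
      wasserstein p (densMeasure (mixDens e (c / b ^ 2) b)) (stdGauss n) ^ α) atTop (𝓝 0) := by
  have hp0 : 0 < p := by linarith
  have h2p : 0 < 2 - p := by linarith
  have ev1 : ∀ᶠ b : ℝ in atTop, Real.exp (-(b ^ 2 / 8)) ≤ 1 / 2 := by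
    have := Real.tendsto_exp_neg_atTop_nhds_zero.comp (tendsto_sq_div_atTop (r := 8) (by norm_num))
    exact this.eventually_le_const (by norm_num)
  have ev2 : ∀ᶠ b : ℝ in atTop, Real.exp (-(b ^ 2 / 32)) ≤ c / b ^ 2 / 8 := by
    have := (Real.tendsto_pow_mul_exp_neg_atTop_nhds_zero 1).comp
      (tendsto_sq_div_atTop (r := 32) (by norm_num))
    filter_upwards [this.eventually_le_const (by positivity : 0 < c / 256),
      eventually_gt_atTop 0] with b hb hb0
    simp only [Function.comp, pow_one] at hb
    rw [div_div, le_div_iff₀ (by positivity)]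
    linarith
  have ev3 : ∀ᶠ b : ℝ in atTop, 0 < b ∧ 0 < c / b ^ 2 ∧ c / b ^ 2 ≤ 1 / 2 := by
    filter_upwards [eventually_ge_atTop 2] with b hb
    have hb0 : 0 < b := by linarith
    refine ⟨hb0, by positivity, ?_⟩
    rw [div_le_iff₀ (by positivity)]
    nlinarith
  -- both Wasserstein bounds are constant multiples of the same power of `b`
  have hpow : ∀ b : ℝ, 0 < b → b ^ p / b ^ 2 = b ^ (-(2 - p)) := by
    intro b hb
    rw [neg_sub, Real.rpow_sub hb]; norm_cast
  have evW : ∀ᶠ b : ℝ in atTop,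
      (c / (8 * 4 ^ p) * b ^ (-(2 - p))) ^ (1 / p) ≤
          wasserstein p (densMeasure (mixDens e (c / b ^ 2) b)) (stdGauss n) ∧
        wasserstein p (densMeasure (mixDens e (c / b ^ 2) b)) (stdGauss n) ≤
          (c * b ^ (-(2 - p))) ^ (1 / p) := by
    filter_upwards [ev1, ev2, ev3] with b h1 h2 h3
    obtain ⟨hb0, hε0, hε1⟩ := h3
    obtain ⟨hl, hu⟩ := mixDens_wasserstein he hε0 (by linarith) hb0 h1 h2 hp1
    constructor
    · convert hl using 2
      rw [← hpow b hb0, Real.div_rpow hb0.le (by norm_num)]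
      field_simp
    · convert hu using 2
      rw [← hpow b hb0]
      field_simp
  have evD : ∀ᶠ b : ℝ in atTop, |lsiDeficit (mixDens e (c / b ^ 2) b)| ≤
      c / b ^ 2 + c / b ^ 2 * Real.log (2 / (c / b ^ 2))
        + 2 * (b ^ 2 * Real.exp (-(b ^ 2 / 8))) := by
    filter_upwards [ev3] with b h3
    exact mixDens_deficit he h3.2.1 h3.2.2
  refine ⟨?_, ?_, ?_, ?_⟩
  · filter_upwards [evW, ev3] with b hW h3
    obtain ⟨hb0, hε0, hε1⟩ := h3
    exact ⟨hb0, by linarith, lt_of_lt_of_le (by positivity) hW.1⟩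
  · refine squeeze_zero_norm' ?_ (by simpa using deficit_bound_tendsto hc hc1 (θ := 0) (by norm_num))
    filter_upwards [evD] with b h using h
  · have t : Tendsto (fun b : ℝ => (c * b ^ (-(2 - p))) ^ (1 / p)) atTop (𝓝 0) := by
      have := ((tendsto_rpow_neg_atTop h2p).const_mul c).rpow_const (p := 1 / p)
        (Or.inr (by positivity))
      rwa [mul_zero, Real.zero_rpow (by positivity)] at this
    refine squeeze_zero' ?_ ?_ t
    · exact Eventually.of_forall fun b => ENNReal.toReal_nonneg
    · filter_upwards [evW] with b h using h.2
  · -- the Wasserstein lower bound to the power `α` is `K * b ^ (-θ)` with `θ < 2`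
    set θ := (2 - p) * (α / p) with hθdef
    have hθ : θ < 2 := by
      rw [lt_div_iff₀ h2p] at hα
      rw [hθdef, ← mul_div_assoc, div_lt_iff₀ hp0]
      linarith
    set K := (c / (8 * 4 ^ p)) ^ (α / p) with hK
    have hKpos : 0 < K := by positivity
    have t := (deficit_bound_tendsto hc hc1 hθ).const_mul K⁻¹
    rw [mul_zero] at t
    refine squeeze_zero_norm' ?_ t
    filter_upwards [evW, evD, ev3] with b hW hD h3
    obtain ⟨hb0, -, -⟩ := h3
    have hWα : K * b ^ (-θ) ≤
        wasserstein p (densMeasure (mixDens e (c / b ^ 2) b)) (stdGauss n) ^ α := by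
      have := Real.rpow_le_rpow (by positivity) hW.1 hα0.le
      refine le_trans (le_of_eq ?_) this
      rw [← Real.rpow_mul (by positivity), Real.mul_rpow (by positivity) (by positivity),
        ← Real.rpow_mul hb0.le, one_div_mul_eq_div, hθdef, neg_mul]
    rw [Real.norm_eq_abs, abs_div, abs_of_nonneg ((by positivity : (0 : ℝ) ≤ K * b ^ (-θ)).trans hWα)]
    refine (div_le_div₀ ((abs_nonneg _).trans hD) hD (by positivity) hWα).trans (le_of_eq ?_)
    rw [Real.rpow_neg hb0.le]
    field_simp

end Sharpness

/-- Sharpness of the exponent `2p/(2−p)` for `W_p`-stability of the LSI, `p ∈ [1,2)`. -/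
theorem lsi_sharp_exponent_Wp (n : ℕ) (hn : 1 ≤ n) (p : ℝ) (hp1 : 1 ≤ p) (hp2 : p < 2)
    (M : ℝ) (hM : (n : ℝ) < M) (α : ℝ) (hα0 : 0 < α) (hα : α < 2 * p / (2 - p)) :
    ∃ f : ℕ → En n → ℝ,
      (∀ k x, 0 ≤ f k x) ∧
      (∀ k, IsProbabilityMeasure (densMeasure (f k))) ∧
      (∀ k, IsCentered (densMeasure (f k))) ∧
      (∀ k, moment 2 (densMeasure (f k)) ≤ M) ∧
      Tendsto (fun k => lsiDeficit (f k)) atTop (𝓝 0) ∧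
      Tendsto (fun k => wasserstein p (densMeasure (f k)) (stdGauss n)) atTop (𝓝 0) ∧
      (∀ k, 0 < wasserstein p (densMeasure (f k)) (stdGauss n)) ∧
      Tendsto (fun k => lsiDeficit (f k) /
          wasserstein p (densMeasure (f k)) (stdGauss n) ^ α) atTop (𝓝 0) := by
  set c := min (M - n) 1 with hcdef
  have hc : 0 < c := lt_min (by linarith) one_pos
  have hc1 : c ≤ 1 := min_le_right _ _
  have hcM : c ≤ M - n := min_le_left _ _
  obtain ⟨e, he⟩ : ∃ e : En n, ‖e‖ = 1 :=
    ⟨EuclideanSpace.single (⟨0, hn⟩ : Fin n) 1, by simp⟩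
  obtain ⟨hev, hD, hW, hR⟩ := mixDens_family he hp1 hp2 hα0 hα hc hc1
  obtain ⟨N, hN⟩ := eventually_atTop.mp hev
  have hb : Tendsto (fun k : ℕ => (k : ℝ) + N) atTop atTop :=
    tendsto_atTop_add_const_right _ _ tendsto_natCast_atTop_atTop
  have hk : ∀ k : ℕ, N ≤ (k : ℝ) + N := fun k => by
    have : (0 : ℝ) ≤ k := Nat.cast_nonneg k
    linarith
  have hε : ∀ k : ℕ, 0 < c / ((k : ℝ) + N) ^ 2 := fun k => by
    have := (hN _ (hk k)).1
    positivity
  refine ⟨fun k => mixDens e (c / ((k : ℝ) + N) ^ 2) ((k : ℝ) + N),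
    fun k x => mixDens_nonneg e (hε k) (hN _ (hk k)).2.1 x,
    fun k => mixDens_prob he (hε k) (hN _ (hk k)).2.1,
    fun k => mixDens_centered he (hε k) (hN _ (hk k)).2.1,
    fun k => ?_, hD.comp hb, hW.comp hb, fun k => (hN _ (hk k)).2.2, hR.comp hb⟩
  have h0 := (hN _ (hk k)).1
  rw [mixDens_moment he (hε k) (hN _ (hk k)).2.1, div_mul_cancel₀ _ (by positivity)]
  linarith
end
end
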